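/- arXiv:0805.1664 — 11 statements merged into one kernel-verified Lean document; each statement's English description precedes it below -/
import Mathlib

section
/- (Mapping Theorem) Let f : (Fin ℓ → ℝ) → ℂ be multiaffine and let a, b : Fin ℓ → ℝ satisfy a i ≤ b i for all i. Then convexHull ℝ (f '' Set.Icc a b) = convexHull ℝ (f '' {v | ∀ i, v i = a i ∨ v i = b i}); that is, the convex hull of the value set over the box equals the convex hull of the images of the 2^ℓ vertices of the box. -/
/-! For a fixed coordinate `i`, a multiaffine map is affine in the `i`-th variable, and affine maps
commute with convex hulls; hence replacing the `i`-th factor of a product of sets by its convex hull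
does not change the convex hull of the image. Doing this for one coordinate after another replaces
all factors. A box is a product of segments, that is, of convex hulls of pairs of endpoints. -/

open Set Function

section Multiaffine

variable {𝕜 ι F : Type*} {E : ι → Type*} [DecidableEq ι] [AddCommGroup F]
  [∀ i, AddCommGroup (E i)]

/-- A map on a product of modules is multiaffine if it is affine in each variable when the others
are fixed. The value `x i` in `update x i` is irrelevant, so `x` ranges over the full product. -/
def IsMultiaffine (𝕜 : Type*) [Ring 𝕜] [Module 𝕜 F] [∀ i, Module 𝕜 (E i)]
    (f : (∀ i, E i) → F) : Prop :=
  ∀ i x, ∃ g : E i →ᵃ[𝕜] F, ∀ t, f (update x i t) = g t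

theorem isMultiaffine_iff_exists_smul_add [Ring 𝕜] [Module 𝕜 F] {f : (ι → 𝕜) → F} :
    IsMultiaffine 𝕜 f ↔ ∀ i x, ∃ c d : F, ∀ t : 𝕜, f (update x i t) = t • c + d := by
  refine forall₂_congr fun i x => ⟨fun ⟨g, hg⟩ => ⟨g.linear 1, g 0, fun t => ?_⟩,
    fun ⟨c, d, h⟩ => ⟨(LinearMap.toSpanSingleton 𝕜 F c).toAffineMap + AffineMap.const 𝕜 𝕜 d, h⟩⟩
  rw [hg, ← map_smul, smul_eq_mul, mul_one]
  exact congrFun g.decomp t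

variable [Ring 𝕜] [PartialOrder 𝕜] [Module 𝕜 F] [∀ i, Module 𝕜 (E i)]
  {f : (∀ i, E i) → F}

theorem IsMultiaffine.apply_mem_convexHull (hf : IsMultiaffine 𝕜 f) {x : ∀ i, E i} {i : ι}
    {s : Set (E i)} (hx : x i ∈ convexHull 𝕜 s) :
    f x ∈ convexHull 𝕜 (f '' (update x i '' s)) := by
  obtain ⟨g, hg⟩ := hf i x
  have himage : f '' (update x i '' s) = g '' s := by
    simp only [image_image, hg]
  rw [himage, ← g.image_convexHull]
  exact ⟨x i, hx, by rw [← hg, update_eq_self]⟩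

theorem IsMultiaffine.convexHull_image_pi_update (hf : IsMultiaffine 𝕜 f) (s : ∀ i, Set (E i))
    (i : ι) :
    convexHull 𝕜 (f '' univ.pi (update s i (convexHull 𝕜 (s i)))) =
      convexHull 𝕜 (f '' univ.pi s) := by
  apply Subset.antisymm
  · refine convexHull_min ?_ (convex_convexHull 𝕜 _)
    rintro _ ⟨x, hx, rfl⟩
    obtain ⟨hxi, hxs⟩ : x i ∈ convexHull 𝕜 (s i) ∧ ∀ j ≠ i, x j ∈ s j := by
      simpa only [mem_univ_pi, forall_update_iff s fun j t => x j ∈ t] using hx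
    refine convexHull_mono (image_mono ?_) (hf.apply_mem_convexHull hxi)
    rintro _ ⟨t, ht, rfl⟩ j -
    exact (forall_update_iff x fun j y => y ∈ s j).2 ⟨ht, hxs⟩ j
  · have hs : s ≤ update s i (convexHull 𝕜 (s i)) :=
      le_update_self_iff.2 (subset_convexHull 𝕜 (s i))
    exact convexHull_mono (image_mono (pi_mono fun j _ => hs j))

theorem IsMultiaffine.convexHull_image_pi_piecewise (hf : IsMultiaffine 𝕜 f)
    (s : ∀ i, Set (E i)) (J : Finset ι) :
    convexHull 𝕜 (f '' univ.pi (J.piecewise (fun i => convexHull 𝕜 (s i)) s)) =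
      convexHull 𝕜 (f '' univ.pi s) := by
  induction J using Finset.induction_on with
  | empty => rw [Finset.piecewise_empty]
  | insert i J hi ih =>
    have hsi : J.piecewise (fun i => convexHull 𝕜 (s i)) s i = s i :=
      Finset.piecewise_eq_of_notMem _ _ _ hi
    rw [Finset.piecewise_insert, ← hsi, hf.convexHull_image_pi_update, ih]

theorem mapping_theorem_general [Finite ι] (hf : IsMultiaffine 𝕜 f) (s : ∀ i, Set (E i)) :
    convexHull 𝕜 (f '' univ.pi fun i => convexHull 𝕜 (s i)) =
      convexHull 𝕜 (f '' univ.pi s) := by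
  cases nonempty_fintype ι
  simpa only [Finset.piecewise_univ] using hf.convexHull_image_pi_piecewise s Finset.univ

end Multiaffine

theorem Icc_eq_pi_convexHull_pair {𝕜 ι : Type*} [Field 𝕜] [LinearOrder 𝕜]
    [IsStrictOrderedRing 𝕜] {a b : ι → 𝕜} (hab : a ≤ b) :
    Icc a b = univ.pi fun i => convexHull 𝕜 {a i, b i} := by
  simp only [convexHull_pair, segment_eq_Icc (hab _), pi_univ_Icc]

theorem ofPred_forall_eq_or_eq {ι : Type*} {α : ι → Type*} (a b : ∀ i, α i) :
    {v : ∀ i, α i | ∀ i, v i = a i ∨ v i = b i} = univ.pi fun i => {a i, b i} := by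
  ext v
  simp only [mem_ofPred_eq, mem_univ_pi, mem_insert_iff, mem_singleton_iff]

/-- **Mapping Theorem.** For a multiaffine map `f : (Fin ℓ → ℝ) → ℂ` and a box
`Set.Icc a b` (pointwise order, `a i ≤ b i`), the convex hull of the value set of the
box equals the convex hull of the images of the `2^ℓ` vertices of the box. -/
theorem mapping_theorem (ℓ : ℕ) (f : (Fin ℓ → ℝ) → ℂ)
    (hf : ∀ (i : Fin ℓ) (q : Fin ℓ → ℝ), ∃ c d : ℂ,
      ∀ t : ℝ, f (Function.update q i t) = t • c + d)
    (a b : Fin ℓ → ℝ) (hab : ∀ i, a i ≤ b i) :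
    convexHull ℝ (f '' Set.Icc a b) =
      convexHull ℝ (f '' {v : Fin ℓ → ℝ | ∀ i, v i = a i ∨ v i = b i}) := by
  rw [Icc_eq_pi_convexHull_pair hab, ofPred_forall_eq_or_eq]
  exact mapping_theorem_general (isMultiaffine_iff_exists_smul_add.2 hf) _
end

section
/- (k_l = k_m when the critical vertices differ in at most one coordinate) Let f : (Fin ℓ → ℝ) → ℂ be multiaffine, let Q = Set.Icc a b with a i ≤ b i for all i, let q⁰ ∈ Q and k ≥ 0. Suppose u and v are vertices of Q differing in at most one coordinate such that 0 ∈ segment ℝ (f (q⁰ + k • (u − q⁰))) (f (q⁰ + k • (v − q⁰))). Then 0 ∈ f '' (k-inflation of Q about q⁰), and moreover 0 ∈ f '' (κ-inflation of Q about q⁰) for every κ ≥ k. -/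
/-!
Two vertices that differ only in coordinate `i₀` span a line parallel to that axis, and inflation
keeps them on such a line. A multiaffine `f` is affine along it, so `f` carries the segment between
the inflated vertices onto the segment between their images. Hence the zero found in the convex hull
of the two values is already a value of `f` on the inflated box. Larger inflations only enlarge the
box, because the box is star-shaped about `q₀`.
-/

section AffineInCoord

/-- `f` is affine in its `i`-th coordinate when the others are held fixed. A multiaffine function is
one with this property for every `i`; the slope `c` and the intercept `d` may depend on `q`. -/
def AffineInCoord {ι 𝕜 E : Type*} [DecidableEq ι] [Add E] [SMul 𝕜 E]
    (f : (ι → 𝕜) → E) (i : ι) : Prop :=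
  ∀ q : ι → 𝕜, ∃ c d : E, ∀ t : 𝕜, f (Function.update q i t) = t • c + d

variable {ι 𝕜 E : Type*} [DecidableEq ι] [AddCommGroup E] {f : (ι → 𝕜) → E} {i : ι} {x y : ι → 𝕜}

theorem AffineInCoord.apply_lineMap [CommRing 𝕜] [Module 𝕜 E] (hf : AffineInCoord f i)
    (hxy : ∀ j, j ≠ i → x j = y j) (t : 𝕜) :
    f (AffineMap.lineMap x y t) = AffineMap.lineMap (f x) (f y) t := by
  obtain ⟨c, d, hcd⟩ := hf x
  have apply_eq {z : ι → 𝕜} (hz : ∀ j, j ≠ i → z j = x j) : f z = z i • c + d := by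
    rw [← hcd, ← Function.eq_update_iff.2 ⟨rfl, hz⟩]
  have lineMap_eq (j : ι) (hj : j ≠ i) : AffineMap.lineMap x y t j = x j := by
    rw [AffineMap.pi_lineMap_apply, ← hxy j hj, AffineMap.lineMap_same_apply]
  rw [apply_eq lineMap_eq, apply_eq fun _ _ => rfl, apply_eq fun j hj => (hxy j hj).symm]
  simp only [AffineMap.pi_lineMap_apply, AffineMap.lineMap_apply_module, smul_eq_mul]
  module

variable [CommRing 𝕜] [PartialOrder 𝕜] [AddRightMono 𝕜] [Module 𝕜 E]

theorem AffineInCoord.image_segment (hf : AffineInCoord f i) (hxy : ∀ j, j ≠ i → x j = y j) :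
    f '' segment 𝕜 x y = segment 𝕜 (f x) (f y) := by
  simp only [segment_eq_image_lineMap, Set.image_image, hf.apply_lineMap hxy]

theorem AffineInCoord.segment_subset_image (hf : AffineInCoord f i)
    (hxy : ∀ j, j ≠ i → x j = y j) {S : Set (ι → 𝕜)} (hS : Convex 𝕜 S) (hx : x ∈ S) (hy : y ∈ S) :
    segment 𝕜 (f x) (f y) ⊆ f '' S :=
  hf.image_segment hxy ▸ Set.image_mono (hS.segment_subset hx hy)

end AffineInCoord

section Inflation

/-- The `k`-inflation `kQ` of `Q` about `q₀`: the image of `Q` under the homothety with centre `q₀`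
and ratio `k`, written with explicit vector operations rather than `AffineMap.homothety`. -/
def inflation {𝕜 V : Type*} [AddCommGroup V] [SMul 𝕜 V] (q₀ : V) (k : 𝕜) (Q : Set V) : Set V :=
  (fun q => q₀ + k • (q - q₀)) '' Q

variable {𝕜 V : Type*} [AddCommGroup V] {q₀ : V} {Q : Set V} {k κ : 𝕜}

theorem inflation_eq_image_homothety [CommRing 𝕜] [Module 𝕜 V] (q₀ : V) (k : 𝕜) (Q : Set V) :
    inflation q₀ k Q = AffineMap.homothety q₀ k '' Q :=
  Set.image_congr fun _ _ => add_comm _ _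

theorem convex_inflation [CommRing 𝕜] [PartialOrder 𝕜] [Module 𝕜 V]
    (hQ : Convex 𝕜 Q) (q₀ : V) (k : 𝕜) : Convex 𝕜 (inflation q₀ k Q) := by
  rw [inflation_eq_image_homothety]
  exact hQ.affine_image _

theorem inflation_subset_self [Ring 𝕜] [PartialOrder 𝕜] [AddRightMono 𝕜] [Module 𝕜 V]
    (hQ : StarConvex 𝕜 q₀ Q) (hk : 0 ≤ k) (hk_one : k ≤ 1) : inflation q₀ k Q ⊆ Q := by
  rintro _ ⟨q, hq, rfl⟩
  exact hQ.add_smul_sub_mem hq hk hk_one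

theorem inflation_subset_inflation [Field 𝕜] [LinearOrder 𝕜] [IsStrictOrderedRing 𝕜]
    [Module 𝕜 V] (hQ : StarConvex 𝕜 q₀ Q) (hk : 0 ≤ k) (hkκ : k ≤ κ) :
    inflation q₀ k Q ⊆ inflation q₀ κ Q := by
  have hκ : 0 ≤ κ := hk.trans hkκ
  -- For `κ = 0` the quotient `k / κ` is the junk value `0`, but then `k = 0` too.
  have mul_ratio : κ * (k / κ) = k :=
    mul_div_cancel_of_imp' fun h => le_antisymm (hkκ.trans_eq h) hk
  calc inflation q₀ k Q
      = inflation q₀ κ (inflation q₀ (k / κ) Q) := by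
        simp only [inflation_eq_image_homothety, Set.image_image, ← AffineMap.homothety_mul_apply,
          mul_ratio]
    _ ⊆ inflation q₀ κ Q :=
        Set.image_mono (inflation_subset_self hQ (div_nonneg hk hκ) (div_le_one_of_le₀ hkκ hκ))

end Inflation

theorem mem_Icc_of_forall_eq_or_eq {ι : Type*} {α : ι → Type*} [∀ i, Preorder (α i)]
    {a b v : ∀ i, α i} (hab : a ≤ b) (hv : ∀ i, v i = a i ∨ v i = b i) : v ∈ Set.Icc a b :=
  ⟨fun i => (hv i).elim Eq.ge fun h => (hab i).trans_eq h.symm,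
    fun i => (hv i).elim (fun h => h.trans_le (hab i)) Eq.le⟩

theorem kl_eq_km_of_adjacent_critical_vertices_general {ι 𝕜 E : Type*} [DecidableEq ι]
    [Field 𝕜] [LinearOrder 𝕜] [IsStrictOrderedRing 𝕜] [AddCommGroup E] [Module 𝕜 E]
    {f : (ι → 𝕜) → E} {i₀ : ι} (hf : AffineInCoord f i₀)
    {Q : Set (ι → 𝕜)} (hQ : Convex 𝕜 Q) {q₀ u v : ι → 𝕜} (hq₀ : q₀ ∈ Q) (hu : u ∈ Q) (hv : v ∈ Q)
    (huv : ∀ j, j ≠ i₀ → u j = v j) {k κ : 𝕜} (hk : 0 ≤ k) (hkκ : k ≤ κ) {z : E}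
    (hz : z ∈ segment 𝕜 (f (q₀ + k • (u - q₀))) (f (q₀ + k • (v - q₀)))) :
    z ∈ f '' inflation q₀ κ Q := by
  have inflated_agree (j : ι) (hj : j ≠ i₀) :
      (q₀ + k • (u - q₀)) j = (q₀ + k • (v - q₀)) j := by
    simp only [Pi.add_apply, Pi.smul_apply, Pi.sub_apply, huv j hj]
  have mem_image : z ∈ f '' inflation q₀ k Q :=
    hf.segment_subset_image inflated_agree (convex_inflation hQ q₀ k) ⟨u, hu, rfl⟩ ⟨v, hv, rfl⟩ hz
  exact Set.image_mono (inflation_subset_inflation (hQ.starConvex hq₀) hk hkκ) mem_image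

/-- **`k_l = k_m` when the critical vertices differ in at most one coordinate.**
If two vertices of the box differing in at most one coordinate have images (after
`k`-inflation about `q⁰ ∈ Q`) whose segment contains the origin, then the value set of
the `k`-inflated box contains the origin, and so does the value set of the `κ`-inflated
box for every `κ ≥ k` (for `f` multiaffine). -/
theorem kl_eq_km_of_adjacent_critical_vertices (ℓ : ℕ) (f : (Fin ℓ → ℝ) → ℂ)
    (hf : ∀ (i : Fin ℓ) (q : Fin ℓ → ℝ), ∃ c d : ℂ,
      ∀ t : ℝ, f (Function.update q i t) = t • c + d)
    (a b : Fin ℓ → ℝ) (hab : ∀ i, a i ≤ b i)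
    (q₀ : Fin ℓ → ℝ) (hq₀ : q₀ ∈ Set.Icc a b) (k : ℝ) (hk : 0 ≤ k)
    (u v : Fin ℓ → ℝ)
    (hu : ∀ i, u i = a i ∨ u i = b i) (hv : ∀ i, v i = a i ∨ v i = b i)
    (i₀ : Fin ℓ) (huv : ∀ j, j ≠ i₀ → u j = v j)
    (h0 : (0 : ℂ) ∈ segment ℝ (f (q₀ + k • (u - q₀))) (f (q₀ + k • (v - q₀)))) :
    (0 : ℂ) ∈ f '' ((fun q => q₀ + k • (q - q₀)) '' Set.Icc a b) ∧
      ∀ κ : ℝ, k ≤ κ →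
        (0 : ℂ) ∈ f '' ((fun q => q₀ + κ • (q - q₀)) '' Set.Icc a b) := by
  have zero_mem_image {κ : ℝ} (hkκ : k ≤ κ) : (0 : ℂ) ∈ f '' inflation q₀ κ (Set.Icc a b) :=
    kl_eq_km_of_adjacent_critical_vertices_general (hf i₀) (convex_Icc a b) hq₀
      (mem_Icc_of_forall_eq_or_eq hab hu) (mem_Icc_of_forall_eq_or_eq hab hv) huv hk hkκ h0
  exact ⟨zero_mem_image le_rfl, fun _ => zero_mem_image⟩
end

section
/- (Maximal-cut: eventually only infinitely-cut coordinates are cut) In the bisection setup satisfying the maximal-cut rule, let I_f := {j : Fin ℓ | the set {r | i r = j} is finite} be the set of coordinates that are cut only finitely many times. Then there exists R such that for all r ≥ R, U r ∩ I_f = ∅. -/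
/-!
Each cut multiplies a width by a fixed factor in `(0, 1)`, so a coordinate cut finitely often keeps
its width above some `ε > 0`, while the width of a coordinate cut infinitely often tends to zero.
As there are finitely many coordinates, the coordinate cut at a late step is one that is cut
infinitely often, and its width at that step is below `ε`. By maximality no coordinate of width
at least `ε` can then belong to `U r`.
-/

open Filter

theorem tendsto_count_atTop_of_infinite {p : ℕ → Prop} [DecidablePred p]
    (hp : {r | p r}.Infinite) : Tendsto (Nat.count p) atTop atTop :=
  tendsto_atTop_atTop_of_monotone (Nat.count_monotone p) fun n =>
    ⟨Nat.nth p n, (Nat.count_nth_of_infinite hp n).ge⟩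

theorem eventually_infinite_fiber {ι : Type*} [Finite ι] (i : ℕ → ι) :
    ∀ᶠ r in atTop, {s | i s = i r}.Infinite := by
  have avoid_finite : ∀ᶠ r in atTop, ∀ j, {s | i s = j}.Finite → i r ≠ j := by
    simp only [eventually_all, ← Nat.cofinite_eq_atTop]
    exact fun j hj => hj.eventually_cofinite_notMem
  exact avoid_finite.mono fun r hr hfin => hr (i r) hfin rfl

/-- The evolution of the widths `w r j` of the coordinates `j` of a box at the stages `r` of a
cutting process: step `r` multiplies the width of the coordinate `i r` by `θ` and keeps all the
others. Only widths are recorded, not endpoints; bisection is the case `θ = 1 / 2`. -/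
structure IsCutSequence {ι M : Type*} [Mul M] (θ : M) (i : ℕ → ι) (w : ℕ → ι → M) : Prop where
  succ_cut (r : ℕ) : w (r + 1) (i r) = θ * w r (i r)
  succ_of_ne (r : ℕ) (j : ι) (hj : j ≠ i r) : w (r + 1) j = w r j

namespace IsCutSequence

variable {ι : Type*}

theorem of_bisection {𝕜 : Type*} [Field 𝕜] [CharZero 𝕜] {a b : ℕ → ι → 𝕜} {i : ℕ → ι}
    (hfix : ∀ r, ∀ j, j ≠ i r → a (r + 1) j = a r j ∧ b (r + 1) j = b r j)
    (hcut : ∀ r,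
      (a (r + 1) (i r) = (a r (i r) + b r (i r)) / 2 ∧ b (r + 1) (i r) = b r (i r)) ∨
      (a (r + 1) (i r) = a r (i r) ∧ b (r + 1) (i r) = (a r (i r) + b r (i r)) / 2)) :
    IsCutSequence (1 / 2) i fun r j => b r j - a r j where
  succ_cut r := by
    rcases hcut r with ⟨ha, hb⟩ | ⟨ha, hb⟩ <;> rw [ha, hb] <;> ring
  succ_of_ne r j hj := by
    obtain ⟨ha, hb⟩ := hfix r j hj
    rw [ha, hb]

theorem eq_pow_count_mul [DecidableEq ι] {M : Type*} [Monoid M] {θ : M} {i : ℕ → ι}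
    {w : ℕ → ι → M} (hw : IsCutSequence θ i w) (r : ℕ) (j : ι) :
    w r j = θ ^ Nat.count (fun s => i s = j) r * w 0 j := by
  induction r with
  | zero => rw [Nat.count_zero, pow_zero, one_mul]
  | succ r ih =>
    by_cases hj : i r = j
    · subst hj
      rw [hw.succ_cut, ih, Nat.count_succ, if_pos rfl, pow_succ', mul_assoc]
    · rw [hw.succ_of_ne r j (Ne.symm hj), ih, Nat.count_succ, if_neg hj, add_zero]

theorem exists_pos_forall_le_of_finite {R : Type*} [Semiring R] [PartialOrder R]
    [IsStrictOrderedRing R] {θ : R} {i : ℕ → ι} {w : ℕ → ι → R} (hw : IsCutSequence θ i w)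
    (hθ₀ : 0 < θ) (hθ₁ : θ ≤ 1) {j : ι} (hw₀ : 0 < w 0 j) (hj : {r | i r = j}.Finite) :
    ∃ ε > 0, ∀ r, ε ≤ w r j := by
  classical
  refine ⟨θ ^ hj.toFinset.card * w 0 j, mul_pos (pow_pos hθ₀ _) hw₀, fun r => ?_⟩
  rw [hw.eq_pow_count_mul r j]
  exact mul_le_mul_of_nonneg_right
    (pow_le_pow_of_le_one hθ₀.le hθ₁ (Nat.count_le_card hj r)) hw₀.le

section Archimedean

variable {𝕜 : Type*} [Field 𝕜] [LinearOrder 𝕜] [IsStrictOrderedRing 𝕜] [Archimedean 𝕜]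
  {θ ε : 𝕜} {i : ℕ → ι} {w : ℕ → ι → 𝕜}

theorem eventually_lt_of_infinite (hw : IsCutSequence θ i w) (hθ₀ : 0 ≤ θ) (hθ₁ : θ < 1) {j : ι}
    (hw₀ : 0 < w 0 j) (hj : {r | i r = j}.Infinite) (hε : 0 < ε) :
    ∀ᶠ r in atTop, w r j < ε := by
  classical
  obtain ⟨n, hn⟩ := exists_pow_lt_of_lt_one (div_pos hε hw₀) hθ₁
  filter_upwards [(tendsto_count_atTop_of_infinite hj).eventually_ge_atTop n] with r hr
  calc w r j = θ ^ Nat.count (fun s => i s = j) r * w 0 j := hw.eq_pow_count_mul r j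
    _ ≤ θ ^ n * w 0 j :=
      mul_le_mul_of_nonneg_right (pow_le_pow_of_le_one hθ₀ hθ₁.le hr) hw₀.le
    _ < ε := (lt_div_iff₀ hw₀).mp hn

theorem eventually_cut_lt [Finite ι] (hw : IsCutSequence θ i w) (hθ₀ : 0 ≤ θ) (hθ₁ : θ < 1)
    (hw₀ : ∀ j, 0 < w 0 j) (hε : 0 < ε) : ∀ᶠ r in atTop, w r (i r) < ε := by
  have small : ∀ᶠ r in atTop, ∀ j, {s | i s = j}.Infinite → w r j < ε := by
    simp only [eventually_all]
    exact fun j hj => hw.eventually_lt_of_infinite hθ₀ hθ₁ (hw₀ j) hj hε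
  filter_upwards [small, eventually_infinite_fiber i] with r hr hinf using hr (i r) hinf

end Archimedean

end IsCutSequence

theorem maximal_cut_eventually_no_finite_coords_general {ι 𝕜 : Type*} [Finite ι] [Field 𝕜]
    [LinearOrder 𝕜] [IsStrictOrderedRing 𝕜] [Archimedean 𝕜] {θ : 𝕜} (hθ₀ : 0 < θ) (hθ₁ : θ < 1)
    {i : ℕ → ι} {w : ℕ → ι → 𝕜} (hw : IsCutSequence θ i w) (hw₀ : ∀ j, 0 < w 0 j)
    {U : ℕ → Set ι} (hmax : ∀ r, ∀ j ∈ U r, w r j ≤ w r (i r)) :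
    ∀ᶠ r in atTop, Disjoint (U r) {j | {r | i r = j}.Finite} := by
  simp only [Set.disjoint_right, Set.mem_ofPred_eq, eventually_all]
  intro j hj
  obtain ⟨ε, hε, hle⟩ := hw.exists_pos_forall_le_of_finite hθ₀ hθ₁.le (hw₀ j) hj
  filter_upwards [hw.eventually_cut_lt hθ₀.le hθ₁ hw₀ hε] with r hr hjU
  exact ((hle r).trans (hmax r j hjU)).not_gt hr

/-- **Maximal-cut: eventually only infinitely-cut coordinates are cut.**
In the bisection setup with the maximal-cut rule, the coordinates that are cut only
finitely many times eventually disappear from the index sets `U r`. -/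
theorem maximal_cut_eventually_no_finite_coords (ℓ : ℕ) (hℓ : 1 ≤ ℓ)
    (a b : ℕ → Fin ℓ → ℝ) (h₀ : ∀ j, a 0 j < b 0 j)
    (i : ℕ → Fin ℓ) (U : ℕ → Finset (Fin ℓ)) (hUne : ∀ r, (U r).Nonempty)
    (hiU : ∀ r, i r ∈ U r)
    (hfix : ∀ r, ∀ j, j ≠ i r → a (r + 1) j = a r j ∧ b (r + 1) j = b r j)
    (hcut : ∀ r,
      (a (r + 1) (i r) = (a r (i r) + b r (i r)) / 2 ∧ b (r + 1) (i r) = b r (i r)) ∨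
      (a (r + 1) (i r) = a r (i r) ∧ b (r + 1) (i r) = (a r (i r) + b r (i r)) / 2))
    (hmax : ∀ r, b r (i r) - a r (i r) = (U r).sup' (hUne r) (fun j => b r j - a r j)) :
    ∃ R : ℕ, ∀ r ≥ R, (↑(U r) : Set (Fin ℓ)) ∩ {j : Fin ℓ | {r | i r = j}.Finite} = ∅ := by
  have hle : ∀ r, ∀ j ∈ (U r : Set (Fin ℓ)), b r j - a r j ≤ b r (i r) - a r (i r) :=
    fun r _ hj => (Finset.le_sup' (fun j => b r j - a r j) hj).trans_eq (hmax r).symm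
  simpa only [Set.disjoint_iff_inter_eq_empty, eventually_atTop] using
    maximal_cut_eventually_no_finite_coords_general one_half_pos one_half_lt_one
      (.of_bisection hfix hcut) (fun j => sub_pos.mpr (h₀ j)) hle
end

section
/- (Maximal-cut convergence) In the bisection setup satisfying the maximal-cut rule, the largest side length among the coordinates in U r tends to zero: the sequence r ↦ max over j ∈ U r of (b r j − a r j) tends to 0 as r → ∞. -/
/-!
The sum of the absolute side lengths is a nonnegative potential. Each cut lowers it by half the
absolute length of the side being cut. Since the potential converges, its decrements tend to zero,
and hence so do the lengths of the cut sides, which by the maximal-cut rule are the maxima.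
-/

open Filter Topology

theorem tendsto_sub_succ_of_antitone {f : ℕ → ℝ} (hf : Antitone f)
    (hbdd : BddBelow (Set.range f)) :
    Tendsto (fun r => f r - f (r + 1)) atTop (𝓝 0) := by
  have hlim : Tendsto f atTop (𝓝 (⨅ r, f r)) := tendsto_atTop_ciInf hf hbdd
  simpa only [sub_self] using hlim.sub ((tendsto_add_atTop_iff_nat 1).2 hlim)

theorem tendsto_contracted_coordinate {ι : Type*} [Finite ι] (w : ℕ → ι → ℝ) (i : ℕ → ι) {c : ℝ}
    (hnonneg : ∀ r j, 0 ≤ w r j) (hw : Antitone w) (hc : c < 1)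
    (hcontract : ∀ r, w (r + 1) (i r) ≤ c * w r (i r)) :
    Tendsto (fun r => w r (i r)) atTop (𝓝 0) := by
  have := Fintype.ofFinite ι
  have hsum_anti : Antitone fun r => ∑ j, w r j :=
    fun _ _ hrs => Finset.sum_le_sum fun j _ => hw hrs j
  have hsum_bdd : BddBelow (Set.range fun r => ∑ j, w r j) :=
    ⟨0, Set.forall_mem_range.2 fun r => Finset.sum_nonneg fun j _ => hnonneg r j⟩
  have hdecrement (r : ℕ) : (1 - c) * w r (i r) ≤ ∑ j, w r j - ∑ j, w (r + 1) j :=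
    calc (1 - c) * w r (i r) ≤ w r (i r) - w (r + 1) (i r) := by linarith [hcontract r]
      _ ≤ ∑ j, (w r j - w (r + 1) j) :=
        Finset.single_le_sum (f := fun j => w r j - w (r + 1) j)
          (fun j _ => sub_nonneg.2 (hw r.le_succ j)) (Finset.mem_univ (i r))
      _ = ∑ j, w r j - ∑ j, w (r + 1) j := Finset.sum_sub_distrib _ _
  have hc_pos : 0 < 1 - c := sub_pos.2 hc
  have hscaled : Tendsto (fun r => (1 - c) * w r (i r)) atTop (𝓝 0) :=
    squeeze_zero (fun r => mul_nonneg hc_pos.le (hnonneg r (i r))) hdecrement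
      (tendsto_sub_succ_of_antitone hsum_anti hsum_bdd)
  simpa only [inv_mul_cancel_left₀ hc_pos.ne', mul_zero] using hscaled.const_mul (1 - c)⁻¹

theorem tendsto_halved_coordinate {ι : Type*} [Finite ι] (w : ℕ → ι → ℝ) (i : ℕ → ι)
    (hfix : ∀ r j, j ≠ i r → w (r + 1) j = w r j)
    (hhalf : ∀ r, w (r + 1) (i r) = w r (i r) / 2) :
    Tendsto (fun r => w r (i r)) atTop (𝓝 0) := by
  have habs_half (r : ℕ) : |w (r + 1) (i r)| = 1 / 2 * |w r (i r)| := by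
    rw [hhalf, abs_div, abs_two, div_eq_inv_mul, one_div]
  have habs_anti : Antitone fun r j => |w r j| := antitone_nat_of_succ_le fun r j => by
    obtain rfl | hj := eq_or_ne j (i r)
    · linarith [habs_half r, abs_nonneg (w r (i r))]
    · rw [hfix r j hj]
  have habs_tendsto : Tendsto (fun r => |w r (i r)|) atTop (𝓝 0) :=
    tendsto_contracted_coordinate (fun r j => |w r j|) i (fun _ _ => abs_nonneg _) habs_anti
      one_half_lt_one fun r => (habs_half r).le
  exact (tendsto_zero_iff_abs_tendsto_zero _).2 habs_tendsto

theorem maximal_cut_convergence_general {ι : Type*} [Finite ι] (a b : ℕ → ι → ℝ)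
    (i : ℕ → ι) (U : ℕ → Finset ι) (hUne : ∀ r, (U r).Nonempty)
    (hfix : ∀ r, ∀ j, j ≠ i r → a (r + 1) j = a r j ∧ b (r + 1) j = b r j)
    (hcut : ∀ r,
      (a (r + 1) (i r) = (a r (i r) + b r (i r)) / 2 ∧ b (r + 1) (i r) = b r (i r)) ∨
      (a (r + 1) (i r) = a r (i r) ∧ b (r + 1) (i r) = (a r (i r) + b r (i r)) / 2))
    (hmax : ∀ r, b r (i r) - a r (i r) = (U r).sup' (hUne r) (fun j => b r j - a r j)) :
    Tendsto (fun r => (U r).sup' (hUne r) (fun j => b r j - a r j)) atTop (𝓝 0) := by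
  have hside_fix (r : ℕ) (j : ι) (hj : j ≠ i r) : b (r + 1) j - a (r + 1) j = b r j - a r j := by
    rw [(hfix r j hj).1, (hfix r j hj).2]
  have hside_half (r : ℕ) :
      b (r + 1) (i r) - a (r + 1) (i r) = (b r (i r) - a r (i r)) / 2 := by
    obtain ⟨ha, hb⟩ | ⟨ha, hb⟩ := hcut r <;> rw [ha, hb] <;> ring
  simpa only [hmax] using
    tendsto_halved_coordinate (fun r j => b r j - a r j) i hside_fix hside_half

/-- **Maximal-cut convergence.** In the bisection setup with the maximal-cut rule, the
largest side length among the coordinates in `U r` tends to zero. -/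
theorem maximal_cut_convergence (ℓ : ℕ) (hℓ : 1 ≤ ℓ)
    (a b : ℕ → Fin ℓ → ℝ) (h₀ : ∀ j, a 0 j < b 0 j)
    (i : ℕ → Fin ℓ) (U : ℕ → Finset (Fin ℓ)) (hUne : ∀ r, (U r).Nonempty)
    (hiU : ∀ r, i r ∈ U r)
    (hfix : ∀ r, ∀ j, j ≠ i r → a (r + 1) j = a r j ∧ b (r + 1) j = b r j)
    (hcut : ∀ r,
      (a (r + 1) (i r) = (a r (i r) + b r (i r)) / 2 ∧ b (r + 1) (i r) = b r (i r)) ∨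
      (a (r + 1) (i r) = a r (i r) ∧ b (r + 1) (i r) = (a r (i r) + b r (i r)) / 2))
    (hmax : ∀ r, b r (i r) - a r (i r) = (U r).sup' (hUne r) (fun j => b r j - a r j)) :
    Filter.Tendsto (fun r => (U r).sup' (hUne r) (fun j => b r j - a r j))
      Filter.atTop (nhds 0) := by
  exact maximal_cut_convergence_general a b i U hUne hfix hcut hmax
end

section
/- (Fair-cut: eventually only infinitely-cut coordinates are cut) In the bisection setup satisfying the fair-cut rule, let I_f := {j : Fin ℓ | the set {r | i r = j} is finite} be the set of coordinates that are cut only finitely many times. Then there exists R such that for all r ≥ R, U r ∩ I_f = ∅. -/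
/-!
Cutting a coordinate halves its side, so the ratio of the initial to the current side length is
`2 ^ n`, where `n` is the number of cuts so far, and the fair-cut rule says that the coordinate
`i r` has been cut least often among those in `U r`. As only finitely many coordinates are ever cut,
the number of earlier cuts of `i r` tends to infinity with `r` by the pigeonhole principle, while
the number of cuts of a finitely-cut coordinate is bounded. So such a coordinate cannot belong to
`U r` for large `r`.
-/

open Filter

lemma finite_setOf_finite_fiber_self {α β : Type*} {f : α → β} (hf : (Set.range f).Finite) :
    {x | {y | f y = f x}.Finite}.Finite := by
  have hfib : (f ⁻¹' (Set.range f ∩ {b | {y | f y = b}.Finite})).Finite :=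
    (hf.inter_of_left _).preimage' fun _ hb => hb.2
  rwa [Set.preimage_range_inter] at hfib

section Count

variable {ι : Type*} [DecidableEq ι]

lemma injective_prodMk_count_self (i : ℕ → ι) :
    Function.Injective fun r => (i r, Nat.count (i · = i r) r) := by
  intro r s h
  obtain ⟨hi, hcount⟩ := Prod.mk.inj h
  rw [hi] at hcount
  exact Nat.count_injective (p := (i · = i s)) hi rfl hcount

lemma tendsto_count_self_atTop {i : ℕ → ι} (hi : (Set.range i).Finite) :
    Tendsto (fun r => Nat.count (i · = i r) r) atTop atTop := by
  refine tendsto_atTop.2 fun M => ?_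
  have hfin : {r | Nat.count (i · = i r) r < M}.Finite :=
    ((hi.prod (Set.finite_Iio M)).preimage (injective_prodMk_count_self i).injOn).subset
      fun r hr => ⟨Set.mem_range_self r, hr⟩
  simpa only [Nat.cofinite_eq_atTop, Set.mem_ofPred_eq, not_lt] using
    hfin.eventually_cofinite_notMem

lemma exists_forall_count_le_of_finite_fiber {i : ℕ → ι} (hi : (Set.range i).Finite) :
    ∃ M, ∀ j, {r | i r = j}.Finite → ∀ r, Nat.count (i · = j) r ≤ M := by
  classical
  have hfin := finite_setOf_finite_fiber_self hi
  refine ⟨hfin.toFinset.card, fun j hj r => ?_⟩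
  calc Nat.count (i · = j) r
      ≤ Nat.count (fun s => {t | i t = i s}.Finite) r :=
        Nat.count_mono_left fun s _ hs => hs ▸ hj
    _ ≤ hfin.toFinset.card := Nat.count_le_card hfin r

theorem eventually_disjoint_setOf_finite_fiber {i : ℕ → ι} (hi : (Set.range i).Finite)
    {U : ℕ → Set ι} (hU : ∀ r, ∀ j ∈ U r, Nat.count (i · = i r) r ≤ Nat.count (i · = j) r) :
    ∀ᶠ r in atTop, Disjoint (U r) {j | {r | i r = j}.Finite} := by
  obtain ⟨M, hM⟩ := exists_forall_count_le_of_finite_fiber hi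
  filter_upwards [(tendsto_count_self_atTop hi).eventually_gt_atTop M] with r hr
  exact Set.disjoint_left.2 fun j hjU hj => hr.not_ge ((hU r j hjU).trans (hM j hj r))

end Count

lemma eq_div_pow_count {G : Type*} [DivisionMonoid G] {p : ℕ → Prop} [DecidablePred p] {c : G}
    {w : ℕ → G} (hw : ∀ r, w (r + 1) = if p r then w r / c else w r) (r : ℕ) :
    w r = w 0 / c ^ Nat.count p r := by
  induction r with
  | zero => simp
  | succ r ih =>
    rw [hw, Nat.count_succ, ih]
    split_ifs
    · rw [pow_succ', div_mul_eq_div_div_swap]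
    · rw [add_zero]

/-- A sequence of boxes `∏ j, [a r j, b r j]` with nonempty interior, each obtained from the
previous one by halving its side in the coordinate `i r` and keeping one of the two halves. -/
structure IsBisection {ι K : Type*} [Field K] [LinearOrder K] (a b : ℕ → ι → K) (i : ℕ → ι) :
    Prop where
  initial_lt : ∀ j, a 0 j < b 0 j
  eq_of_ne : ∀ r, ∀ j, j ≠ i r → a (r + 1) j = a r j ∧ b (r + 1) j = b r j
  halve : ∀ r,
    (a (r + 1) (i r) = (a r (i r) + b r (i r)) / 2 ∧ b (r + 1) (i r) = b r (i r)) ∨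
    (a (r + 1) (i r) = a r (i r) ∧ b (r + 1) (i r) = (a r (i r) + b r (i r)) / 2)

namespace IsBisection

variable {ι K : Type*} [Field K] [LinearOrder K] [IsStrictOrderedRing K]
  {a b : ℕ → ι → K} {i : ℕ → ι}

lemma side_succ [DecidableEq ι] (h : IsBisection a b i) (r : ℕ) (j : ι) :
    b (r + 1) j - a (r + 1) j = if i r = j then (b r j - a r j) / 2 else b r j - a r j := by
  split_ifs with hj
  · subst hj
    rcases h.halve r with ⟨ha, hb⟩ | ⟨ha, hb⟩ <;> rw [ha, hb] <;> ring
  · obtain ⟨ha, hb⟩ := h.eq_of_ne r j (Ne.symm hj)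
    rw [ha, hb]

lemma side_ratio_eq_two_pow_count [DecidableEq ι] (h : IsBisection a b i) (r : ℕ) (j : ι) :
    (b 0 j - a 0 j) / (b r j - a r j) = 2 ^ Nat.count (i · = j) r := by
  rw [eq_div_pow_count (w := fun r => b r j - a r j) (h.side_succ · j) r]
  exact div_div_cancel₀ (sub_pos.2 (h.initial_lt j)).ne'

end IsBisection

theorem fair_cut_eventually_no_finite_coords_general {ι K : Type*} [Field K] [LinearOrder K]
    [IsStrictOrderedRing K] {a b : ℕ → ι → K} {i : ℕ → ι} (h : IsBisection a b i)
    (hi : (Set.range i).Finite) {U : ℕ → Set ι}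
    (hfair : ∀ r, ∀ j ∈ U r,
      (b 0 (i r) - a 0 (i r)) / (b r (i r) - a r (i r)) ≤ (b 0 j - a 0 j) / (b r j - a r j)) :
    ∀ᶠ r in atTop, Disjoint (U r) {j | {r | i r = j}.Finite} := by
  classical
  simp only [h.side_ratio_eq_two_pow_count, pow_le_pow_iff_right₀ (one_lt_two (α := K))] at hfair
  exact eventually_disjoint_setOf_finite_fiber hi hfair

/-- **Fair-cut: eventually only infinitely-cut coordinates are cut.**
In the bisection setup with the fair-cut rule, the coordinates that are cut only
finitely many times eventually disappear from the index sets `U r`. -/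
theorem fair_cut_eventually_no_finite_coords (ℓ : ℕ) (hℓ : 1 ≤ ℓ)
    (a b : ℕ → Fin ℓ → ℝ) (h₀ : ∀ j, a 0 j < b 0 j)
    (i : ℕ → Fin ℓ) (U : ℕ → Finset (Fin ℓ)) (hUne : ∀ r, (U r).Nonempty)
    (hiU : ∀ r, i r ∈ U r)
    (hfix : ∀ r, ∀ j, j ≠ i r → a (r + 1) j = a r j ∧ b (r + 1) j = b r j)
    (hcut : ∀ r,
      (a (r + 1) (i r) = (a r (i r) + b r (i r)) / 2 ∧ b (r + 1) (i r) = b r (i r)) ∨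
      (a (r + 1) (i r) = a r (i r) ∧ b (r + 1) (i r) = (a r (i r) + b r (i r)) / 2))
    (hfair : ∀ r, (b 0 (i r) - a 0 (i r)) / (b r (i r) - a r (i r)) =
      (U r).inf' (hUne r) (fun j => (b 0 j - a 0 j) / (b r j - a r j))) :
    ∃ R : ℕ, ∀ r ≥ R, (↑(U r) : Set (Fin ℓ)) ∩ {j : Fin ℓ | {r | i r = j}.Finite} = ∅ := by
  simpa only [Set.disjoint_iff_inter_eq_empty, eventually_atTop] using
    fair_cut_eventually_no_finite_coords_general ⟨h₀, hfix, hcut⟩ (Set.toFinite _)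
      fun r _ hj => (hfair r).trans_le (Finset.inf'_le _ hj)
end

section
/- (Fair-cut convergence) In the bisection setup satisfying the fair-cut rule, the largest side length among the coordinates in U r tends to zero: the sequence r ↦ max over j ∈ U r of (b r j − a r j) tends to 0 as r → ∞. -/
/-!
Let `w r j` be the length of side `j` at time `r`, to be compared with its initial value `w 0 j`.
Only finitely many times `r` share both the coordinate being cut and its number of earlier cuts, so
with finitely many coordinates the number of earlier cuts of `i r` tends to infinity with `r`. Each
cut shrinks a side by a fixed factor, hence the relative length `w r (i r) / w 0 (i r)` of the side
being cut tends to zero. The fair-cut rule says that no side in `U r` has a larger relative length,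
and the initial lengths are bounded.
-/

open Filter Topology

theorem tendsto_count_eq_self_atTop {ι : Type*} [DecidableEq ι] {i : ℕ → ι}
    (hi : (Set.range i).Finite) :
    Tendsto (fun r => Nat.count (fun s => i s = i r) r) atTop atTop := by
  have hinj : Function.Injective fun r => (i r, Nat.count (fun s => i s = i r) r) := by
    intro r s h
    obtain ⟨hrs, hcount⟩ := Prod.mk.inj h
    rw [hrs] at hcount
    exact Nat.count_injective (p := fun t => i t = i s) hrs rfl hcount
  refine tendsto_atTop.2 fun n => ?_
  rw [← Nat.cofinite_eq_atTop, eventually_cofinite]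
  refine ((hi.prod (Set.finite_lt_nat n)).preimage hinj.injOn).subset fun r hr => ?_
  exact ⟨Set.mem_range_self r, not_le.1 hr⟩

theorem le_pow_count_mul_initial {ι R : Type*} [DecidableEq ι] [Semiring R] [PartialOrder R]
    [IsOrderedRing R] {w : ℕ → ι → R} {i : ℕ → ι} {q : R} (hq : 0 ≤ q)
    (hanti : ∀ r j, w (r + 1) j ≤ w r j) (hcut : ∀ r, w (r + 1) (i r) ≤ q * w r (i r))
    (r : ℕ) (j : ι) : w r j ≤ q ^ Nat.count (fun s => i s = j) r * w 0 j := by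
  induction r with
  | zero => simp
  | succ r ih =>
    rw [Nat.count_succ]
    split_ifs with h
    · subst h
      calc w (r + 1) (i r) ≤ q * w r (i r) := hcut r
        _ ≤ q * (q ^ Nat.count (fun s => i s = i r) r * w 0 (i r)) := by gcongr
        _ = q ^ (Nat.count (fun s => i s = i r) r + 1) * w 0 (i r) := by rw [pow_succ', mul_assoc]
    · exact (hanti r j).trans ih

section Contraction

variable {ι 𝕜 : Type*} [Field 𝕜] [LinearOrder 𝕜] [IsStrictOrderedRing 𝕜] [Archimedean 𝕜]
  [TopologicalSpace 𝕜] [OrderTopology 𝕜] {w : ℕ → ι → 𝕜} {i : ℕ → ι} {q : 𝕜}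

theorem tendsto_div_initial_of_contraction (hi : (Set.range i).Finite)
    (hpos : ∀ r j, 0 < w r j) (hq : q < 1) (hanti : ∀ r j, w (r + 1) j ≤ w r j)
    (hcut : ∀ r, w (r + 1) (i r) ≤ q * w r (i r)) :
    Tendsto (fun r => w r (i r) / w 0 (i r)) atTop (𝓝 0) := by
  classical
  have hq₀ : 0 ≤ q :=
    (pos_of_mul_pos_left ((hpos 1 (i 0)).trans_le (hcut 0)) (hpos 0 (i 0)).le).le
  have hpow : Tendsto (fun r => q ^ Nat.count (fun s => i s = i r) r) atTop (𝓝 0) :=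
    (tendsto_pow_atTop_nhds_zero_of_lt_one hq₀ hq).comp (tendsto_count_eq_self_atTop hi)
  refine tendsto_of_tendsto_of_tendsto_of_le_of_le tendsto_const_nhds hpow
    (fun r => (div_pos (hpos r _) (hpos 0 _)).le) fun r => ?_
  exact (div_le_iff₀ (hpos 0 _)).2 (le_pow_count_mul_initial hq₀ hanti hcut r (i r))

theorem fair_cut_convergence_general {U : ℕ → Finset ι} (hU : ∀ r, (U r).Nonempty)
    (hi : (Set.range i).Finite) (hbdd : BddAbove (Set.range (w 0)))
    (hpos : ∀ r j, 0 < w r j) (hq : q < 1) (hanti : ∀ r j, w (r + 1) j ≤ w r j)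
    (hcut : ∀ r, w (r + 1) (i r) ≤ q * w r (i r))
    (hfair : ∀ r, ∀ j ∈ U r, w 0 (i r) / w r (i r) ≤ w 0 j / w r j) :
    Tendsto (fun r => (U r).sup' (hU r) (w r)) atTop (𝓝 0) := by
  obtain ⟨C, hC⟩ := hbdd
  have hrel : ∀ r, ∀ j ∈ U r, w r j / w 0 j ≤ w r (i r) / w 0 (i r) := fun r j hj => by
    simpa only [inv_div] using inv_anti₀ (div_pos (hpos 0 _) (hpos r _)) (hfair r j hj)
  have hbound : ∀ r, ∀ j ∈ U r, w r j ≤ C * (w r (i r) / w 0 (i r)) := fun r j hj =>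
    calc w r j = w 0 j * (w r j / w 0 j) := (mul_div_cancel₀ _ (hpos 0 j).ne').symm
      _ ≤ C * (w r (i r) / w 0 (i r)) :=
        mul_le_mul_of_nonneg (hC ⟨j, rfl⟩) (hrel r j hj) (hpos 0 j).le
          (div_pos (hpos r _) (hpos 0 _)).le
  have hlim : Tendsto (fun r => C * (w r (i r) / w 0 (i r))) atTop (𝓝 0) := by
    simpa only [mul_zero] using
      (tendsto_div_initial_of_contraction hi hpos hq hanti hcut).const_mul C
  refine tendsto_of_tendsto_of_tendsto_of_le_of_le tendsto_const_nhds hlim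
    (fun r => ?_) fun r => Finset.sup'_le _ _ (hbound r)
  obtain ⟨j, hj⟩ := hU r
  exact (hpos r j).le.trans (Finset.le_sup' (w r) hj)

end Contraction

/-- The boxes `∏ j, [a r j, b r j]` arise by successive bisection: step `r` keeps one of the two
halves of the side in direction `i r` and leaves all other sides alone. -/
structure IsBisection_s8 {ι 𝕜 : Type*} [Field 𝕜] (a b : ℕ → ι → 𝕜) (i : ℕ → ι) : Prop where
  eq_of_ne : ∀ r j, j ≠ i r → a (r + 1) j = a r j ∧ b (r + 1) j = b r j
  eq_half : ∀ r,
    (a (r + 1) (i r) = (a r (i r) + b r (i r)) / 2 ∧ b (r + 1) (i r) = b r (i r)) ∨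
    (a (r + 1) (i r) = a r (i r) ∧ b (r + 1) (i r) = (a r (i r) + b r (i r)) / 2)

namespace IsBisection_s8

variable {ι 𝕜 : Type*} [Field 𝕜] {a b : ℕ → ι → 𝕜} {i : ℕ → ι}

theorem sub_succ_of_ne (h : IsBisection_s8 a b i) {r : ℕ} {j : ι} (hj : j ≠ i r) :
    b (r + 1) j - a (r + 1) j = b r j - a r j := by
  rw [(h.eq_of_ne r j hj).1, (h.eq_of_ne r j hj).2]

variable [LinearOrder 𝕜] [IsStrictOrderedRing 𝕜]

theorem sub_succ_self (h : IsBisection_s8 a b i) (r : ℕ) :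
    b (r + 1) (i r) - a (r + 1) (i r) = 2⁻¹ * (b r (i r) - a r (i r)) := by
  rcases h.eq_half r with ⟨ha, hb⟩ | ⟨ha, hb⟩ <;> rw [ha, hb] <;> ring

theorem lt (h : IsBisection_s8 a b i) (h₀ : ∀ j, a 0 j < b 0 j) (r : ℕ) (j : ι) :
    a r j < b r j := by
  induction r with
  | zero => exact h₀ j
  | succ r ih =>
    rw [← sub_pos] at ih ⊢
    rcases eq_or_ne j (i r) with rfl | hj
    · rw [h.sub_succ_self]
      positivity
    · rwa [h.sub_succ_of_ne hj]

theorem sub_succ_le (h : IsBisection_s8 a b i) (h₀ : ∀ j, a 0 j < b 0 j) (r : ℕ) (j : ι) :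
    b (r + 1) j - a (r + 1) j ≤ b r j - a r j := by
  rcases eq_or_ne j (i r) with rfl | hj
  · rw [h.sub_succ_self]
    linarith [h.lt h₀ r (i r)]
  · exact (h.sub_succ_of_ne hj).le

end IsBisection_s8

/-- **Fair-cut convergence.** In the bisection setup with the fair-cut rule, the
largest side length among the coordinates in `U r` tends to zero. -/
theorem fair_cut_convergence (ℓ : ℕ) (hℓ : 1 ≤ ℓ)
    (a b : ℕ → Fin ℓ → ℝ) (h₀ : ∀ j, a 0 j < b 0 j)
    (i : ℕ → Fin ℓ) (U : ℕ → Finset (Fin ℓ)) (hUne : ∀ r, (U r).Nonempty)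
    (hiU : ∀ r, i r ∈ U r)
    (hfix : ∀ r, ∀ j, j ≠ i r → a (r + 1) j = a r j ∧ b (r + 1) j = b r j)
    (hcut : ∀ r,
      (a (r + 1) (i r) = (a r (i r) + b r (i r)) / 2 ∧ b (r + 1) (i r) = b r (i r)) ∨
      (a (r + 1) (i r) = a r (i r) ∧ b (r + 1) (i r) = (a r (i r) + b r (i r)) / 2))
    (hfair : ∀ r, (b 0 (i r) - a 0 (i r)) / (b r (i r) - a r (i r)) =
      (U r).inf' (hUne r) (fun j => (b 0 j - a 0 j) / (b r j - a r j))) :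
    Filter.Tendsto (fun r => (U r).sup' (hUne r) (fun j => b r j - a r j))
      Filter.atTop (nhds 0) := by
  have hab : IsBisection_s8 a b i := ⟨hfix, hcut⟩
  exact fair_cut_convergence_general hUne (Set.toFinite _) (Set.finite_range _).bddAbove
    (fun r j => sub_pos.2 (hab.lt h₀ r j)) two_inv_lt_one (hab.sub_succ_le h₀)
    (fun r => (hab.sub_succ_self r).le) fun r _ hj => (hfair r).trans_le (Finset.inf'_le _ hj)
end

section
/- (Theorem 5, maximal-cut) In the bisection setup satisfying the maximal-cut rule, suppose α, β : ℕ → (Fin ℓ → ℝ) satisfy, for every r: α r ∈ Set.Icc (a r) (b r), β r ∈ Set.Icc (a r) (b r), and α r j = β r j for every j ∉ U r. Then the Euclidean distance between α r and β r tends to 0 as r → ∞, i.e., (Σ_j (α r j − β r j)²)^{1/2} → 0; moreover, for every f : (Fin ℓ → ℝ) → ℂ that is continuous on Set.Icc (a 0) (b 0), f (α r) − f (β r) → 0 as r → ∞. -/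
/-!
The total side length of the nested boxes decreases and is bounded below, so its decrements tend
to `0`. A cut removes a fixed proportion of the side it acts on, so the lengths of the sides that
are cut tend to `0` as well. By the maximal-cut rule these lengths dominate the distance between
`α r` and `β r`, and uniform continuity on the compact initial box transfers this to `f`.
-/

open Filter Set Topology Uniformity

theorem tendsto_apply_nhds_zero_of_antitone_of_contracting {ι : Type*} [Finite ι]
    {w : ℕ → ι → ℝ} {i : ℕ → ι} {c : ℝ} (hc : c < 1) (hw : Antitone w) (hnonneg : ∀ r, 0 ≤ w r)
    (hcontr : ∀ r, w (r + 1) (i r) ≤ c * w r (i r)) :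
    Tendsto (fun r => w r (i r)) atTop (𝓝 0) := by
  obtain ⟨_⟩ := nonempty_fintype ι
  have hdecrement (j : ι) : Tendsto (fun r => w r j - w (r + 1) j) atTop (𝓝 0) := by
    have hlim := tendsto_atTop_ciInf (fun _ _ h => hw h j)
      ⟨0, forall_mem_range.2 fun r => hnonneg r j⟩
    simpa only [sub_self, Function.comp_apply] using
      hlim.sub (hlim.comp (tendsto_add_atTop_nat 1))
  have htotal : Tendsto (fun r => (∑ j, (w r j - w (r + 1) j)) / (1 - c)) atTop (𝓝 0) := by
    simpa only [Finset.sum_const_zero, zero_div] using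
      (tendsto_finsetSum Finset.univ fun j _ => hdecrement j).div_const (1 - c)
  refine squeeze_zero (fun r => hnonneg r (i r)) (fun r => ?_) htotal
  rw [le_div_iff₀ (sub_pos.2 hc)]
  calc
    w r (i r) * (1 - c) ≤ w r (i r) - w (r + 1) (i r) := by linarith [hcontr r]
    _ ≤ ∑ j, (w r j - w (r + 1) j) :=
      Finset.single_le_sum (f := fun j => w r j - w (r + 1) j)
        (fun j _ => sub_nonneg.2 (hw r.le_succ j)) (Finset.mem_univ (i r))

theorem dist_le_of_mem_Icc_of_eqOn_compl {ι : Type*} [Fintype ι] {a b x y : ι → ℝ} {s : Set ι}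
    {d : ℝ} (hd : 0 ≤ d) (hx : x ∈ Icc a b) (hy : y ∈ Icc a b) (heq : EqOn x y sᶜ)
    (hs : ∀ j ∈ s, b j - a j ≤ d) : dist x y ≤ d := by
  refine (dist_pi_le_iff hd).2 fun j => ?_
  by_cases hj : j ∈ s
  · exact (Real.dist_le_of_mem_Icc ⟨hx.1 j, hx.2 j⟩ ⟨hy.1 j, hy.2 j⟩).trans (hs j hj)
  · rwa [heq hj, dist_self]

theorem tendsto_sqrt_sum_sq_nhds_zero {ι κ : Type*} [Fintype ι] {l : Filter κ} {v : κ → ι → ℝ}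
    (hv : Tendsto v l (𝓝 0)) : Tendsto (fun r => √(∑ j, v r j ^ 2)) l (𝓝 0) := by
  have hcont : Continuous fun u : ι → ℝ => √(∑ j, u j ^ 2) := by fun_prop
  exact (hcont.tendsto' 0 0 (by simp)).comp hv

theorem tendsto_sub_nhds_zero_of_uniformContinuousOn {X E κ : Type*} [UniformSpace X]
    [UniformSpace E] [AddGroup E] [IsUniformAddGroup E] {l : Filter κ} {s : Set X} {f : X → E}
    {x y : κ → X} (hf : UniformContinuousOn f s) (hx : ∀ r, x r ∈ s) (hy : ∀ r, y r ∈ s)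
    (hxy : Tendsto (fun r => (x r, y r)) l (𝓤 X)) :
    Tendsto (fun r => f (x r) - f (y r)) l (𝓝 0) := by
  have hfxy : Tendsto (fun r => (f (x r), f (y r))) l (𝓤 E) :=
    Tendsto.comp hf <| tendsto_inf.2
      ⟨hxy, tendsto_principal.2 (.of_forall fun r => mk_mem_prod (hx r) (hy r))⟩
  rwa [uniformity_eq_comap_nhds_zero_swapped, tendsto_comap_iff] at hfxy

/-- The boxes `Icc (a r) (b r)` form a bisection sequence with cut coordinates `i r`: the next box
is one of the two halves of the current one, cut at the midpoint of its side `i r`. -/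
structure IsBisection_s9 {ι K : Type*} [Field K] (a b : ℕ → ι → K) (i : ℕ → ι) : Prop where
  eq_of_ne : ∀ r, ∀ j, j ≠ i r → a (r + 1) j = a r j ∧ b (r + 1) j = b r j
  cut : ∀ r,
    (a (r + 1) (i r) = (a r (i r) + b r (i r)) / 2 ∧ b (r + 1) (i r) = b r (i r)) ∨
    (a (r + 1) (i r) = a r (i r) ∧ b (r + 1) (i r) = (a r (i r) + b r (i r)) / 2)

namespace IsBisection_s9

variable {ι K : Type*} [Field K] [LinearOrder K] [IsStrictOrderedRing K]
  {a b : ℕ → ι → K} {i : ℕ → ι}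

theorem monotone_left (h : IsBisection_s9 a b i) (hab : ∀ r, a r ≤ b r) : Monotone a := by
  refine monotone_nat_of_le_succ fun r j => ?_
  obtain rfl | hj := eq_or_ne j (i r)
  · rcases h.cut r with hr | hr <;> linarith [hab r (i r), hr.1]
  · exact (h.eq_of_ne r j hj).1.ge

theorem antitone_right (h : IsBisection_s9 a b i) (hab : ∀ r, a r ≤ b r) : Antitone b := by
  refine antitone_nat_of_succ_le fun r j => ?_
  obtain rfl | hj := eq_or_ne j (i r)
  · rcases h.cut r with hr | hr <;> linarith [hab r (i r), hr.2]
  · exact (h.eq_of_ne r j hj).2.le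

theorem sub_succ_apply_cut (h : IsBisection_s9 a b i) (r : ℕ) :
    b (r + 1) (i r) - a (r + 1) (i r) = 1 / 2 * (b r (i r) - a r (i r)) := by
  rcases h.cut r with hr | hr <;> rw [hr.1, hr.2] <;> ring

end IsBisection_s9

theorem theorem5_maximal_cut_general {ι E : Type*} [Fintype ι] [UniformSpace E] [AddGroup E]
    [IsUniformAddGroup E] {a b α β : ℕ → ι → ℝ} {i : ℕ → ι} {U : ℕ → Set ι} {c : ℝ}
    (hc : c < 1) (ha : Monotone a) (hb : Antitone b)
    (hcut : ∀ r, b (r + 1) (i r) - a (r + 1) (i r) ≤ c * (b r (i r) - a r (i r)))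
    (hmax : ∀ r, ∀ j ∈ U r, b r j - a r j ≤ b r (i r) - a r (i r))
    (hα : ∀ r, α r ∈ Icc (a r) (b r)) (hβ : ∀ r, β r ∈ Icc (a r) (b r))
    (hagree : ∀ r, EqOn (α r) (β r) (U r)ᶜ) :
    Tendsto (fun r => √(∑ j, (α r j - β r j) ^ 2)) atTop (𝓝 0) ∧
      ∀ f : (ι → ℝ) → E, ContinuousOn f (Icc (a 0) (b 0)) →
        Tendsto (fun r => f (α r) - f (β r)) atTop (𝓝 0) := by
  have hside (r : ℕ) : 0 ≤ b r - a r := sub_nonneg.2 ((hα r).1.trans (hα r).2)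
  have hcutside : Tendsto (fun r => b r (i r) - a r (i r)) atTop (𝓝 0) :=
    tendsto_apply_nhds_zero_of_antitone_of_contracting (w := fun r => b r - a r) hc
      (fun _ _ h => sub_le_sub (hb h) (ha h)) hside hcut
  have hdist : Tendsto (fun r => dist (α r) (β r)) atTop (𝓝 0) :=
    squeeze_zero (fun _ => dist_nonneg)
      (fun r => dist_le_of_mem_Icc_of_eqOn_compl (hside r (i r)) (hα r) (hβ r) (hagree r) (hmax r))
      hcutside
  have hnested (r : ℕ) : Icc (a r) (b r) ⊆ Icc (a 0) (b 0) :=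
    Icc_subset_Icc (ha r.zero_le) (hb r.zero_le)
  refine ⟨tendsto_sqrt_sum_sq_nhds_zero (v := fun r => α r - β r) ?_, fun f hf => ?_⟩
  · exact tendsto_zero_iff_norm_tendsto_zero.2 (by simpa only [dist_eq_norm] using hdist)
  · exact tendsto_sub_nhds_zero_of_uniformContinuousOn
      (isCompact_Icc.uniformContinuousOn_of_continuous hf) (fun r => hnested r (hα r))
      (fun r => hnested r (hβ r)) (tendsto_uniformity_iff_dist_tendsto_zero.2 hdist)

/-- **Theorem 5, maximal-cut.** In the bisection setup with the maximal-cut rule, if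
`α r, β r` lie in the `r`-th box and agree outside `U r`, then their Euclidean distance
tends to `0`, and `f (α r) - f (β r) → 0` for any `f` continuous on the initial box. -/
theorem theorem5_maximal_cut (ℓ : ℕ) (hℓ : 1 ≤ ℓ)
    (a b : ℕ → Fin ℓ → ℝ) (h₀ : ∀ j, a 0 j < b 0 j)
    (i : ℕ → Fin ℓ) (U : ℕ → Finset (Fin ℓ)) (hUne : ∀ r, (U r).Nonempty)
    (hiU : ∀ r, i r ∈ U r)
    (hfix : ∀ r, ∀ j, j ≠ i r → a (r + 1) j = a r j ∧ b (r + 1) j = b r j)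
    (hcut : ∀ r,
      (a (r + 1) (i r) = (a r (i r) + b r (i r)) / 2 ∧ b (r + 1) (i r) = b r (i r)) ∨
      (a (r + 1) (i r) = a r (i r) ∧ b (r + 1) (i r) = (a r (i r) + b r (i r)) / 2))
    (hmax : ∀ r, b r (i r) - a r (i r) = (U r).sup' (hUne r) (fun j => b r j - a r j))
    (α β : ℕ → Fin ℓ → ℝ)
    (hα : ∀ r, α r ∈ Set.Icc (a r) (b r)) (hβ : ∀ r, β r ∈ Set.Icc (a r) (b r))
    (hagree : ∀ r, ∀ j, j ∉ U r → α r j = β r j) :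
    Filter.Tendsto (fun r => Real.sqrt (∑ j : Fin ℓ, (α r j - β r j) ^ 2))
        Filter.atTop (nhds 0) ∧
      ∀ f : (Fin ℓ → ℝ) → ℂ, ContinuousOn f (Set.Icc (a 0) (b 0)) →
        Filter.Tendsto (fun r => f (α r) - f (β r)) Filter.atTop (nhds 0) := by
  have hbis : IsBisection_s9 a b i := ⟨hfix, hcut⟩
  have hab (r : ℕ) : a r ≤ b r := (hα r).1.trans (hα r).2
  exact theorem5_maximal_cut_general (U := fun r => U r) one_half_lt_one (hbis.monotone_left hab)
    (hbis.antitone_right hab) (fun r => (hbis.sub_succ_apply_cut r).le)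
    (fun r j hj => (Finset.le_sup' (fun k => b r k - a r k) hj).trans_eq (hmax r).symm) hα hβ hagree
end

section
/- (Zero Exclusion Condition) Let 𝒬 ⊆ (Fin ℓ → ℝ) be nonempty and connected, let D ⊆ ℂ be open, and let P : (Fin ℓ → ℝ) → Polynomial ℂ be a polynomial family with continuous coefficients and invariant degree n on 𝒬. Then every root of P q lies in D for every q ∈ 𝒬 if and only if both: (i) there exists q ∈ 𝒬 such that every root of P q lies in D, and (ii) (P q).eval z ≠ 0 for every q ∈ 𝒬 and every z in the frontier of D. -/
/-!
If two polynomials of degree `n` have close coefficients after division by the leading ones, then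
every root `a` of the first lies within a small multiple of `max ‖a‖ 1` of a root `b` of the second,
and vice versa. The factor `max ‖a‖ 1` can be traded for `2 * max ‖b‖ 1`, so no a priori bound on
the roots `a` is needed. Hence, when the coefficients vary continuously and the degree is constant,
roots do not suddenly appear outside an open set containing all of them (not even from infinity),
nor suddenly leave an open set. If no root lies on the boundary of `D`, the property that all roots
lie in `D` is therefore locally constant, and connectedness of the parameter set makes it constant.
-/

open Filter Polynomial Topology

section RootPerturbation

variable {𝕜 : Type*} [NormedField 𝕜]

lemma norm_sub_lt_two_mul_max {a b : 𝕜} {δ : ℝ} (hδ : δ ≤ 1 / 2)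
    (h : ‖a - b‖ < δ * max ‖a‖ 1) : ‖a - b‖ < 2 * δ * max ‖b‖ 1 := by
  have hδ₀ : 0 < δ := pos_of_mul_pos_left ((norm_nonneg _).trans_lt h) (by positivity)
  have hab : ‖a‖ ≤ ‖b‖ + ‖a - b‖ := norm_le_norm_add_norm_sub' a b
  have hmax : max ‖a‖ 1 ≤ max ‖b‖ 1 + 1 / 2 * max ‖a‖ 1 :=
    calc max ‖a‖ 1 ≤ max ‖b‖ 1 + ‖a - b‖ :=
          max_le (hab.trans (by gcongr; exact le_max_left _ _))
            ((le_max_right _ _).trans (le_add_of_nonneg_right (norm_nonneg _)))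
      _ ≤ max ‖b‖ 1 + 1 / 2 * max ‖a‖ 1 := by grw [h, hδ]
  calc ‖a - b‖ < δ * max ‖a‖ 1 := h
    _ ≤ δ * (2 * max ‖b‖ 1) := by gcongr; linarith
    _ = 2 * δ * max ‖b‖ 1 := by ring

lemma eventually_mem_of_norm_sub_lt_mul_max {D : Set 𝕜} {b : 𝕜} (hD : D ∈ 𝓝 b) :
    ∀ᶠ δ : ℝ in 𝓝[>] 0, ∀ a, ‖a - b‖ < δ * max ‖a‖ 1 → a ∈ D := by
  obtain ⟨r, hr, hball⟩ := Metric.mem_nhds_iff.1 hD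
  have hcont : ContinuousAt (fun δ : ℝ => 2 * δ * max ‖b‖ 1) 0 := by fun_prop
  have hsmall : ∀ᶠ δ : ℝ in 𝓝 0, 2 * δ * max ‖b‖ 1 < r :=
    hcont.eventually_lt_const (by simpa using hr)
  have hhalf : ∀ᶠ δ : ℝ in 𝓝 0, δ ≤ 1 / 2 := eventually_le_nhds (by norm_num)
  filter_upwards [nhdsWithin_le_nhds hsmall, nhdsWithin_le_nhds hhalf] with δ hδr hδ a ha
  exact hball (mem_ball_iff_norm.2 ((norm_sub_lt_two_mul_max hδ ha).trans hδr))

lemma exists_root_norm_sub_lt {f g : 𝕜[X]} {δ : ℝ} (hδ : 0 < δ) (hf : f ≠ 0)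
    (hsplit : g.Splits) (hdeg : g.degree = f.degree)
    (hcoeff : ∀ i, ‖g.coeff i / g.leadingCoeff - f.coeff i / f.leadingCoeff‖ <
      δ ^ f.natDegree / (f.natDegree + 1))
    {a : 𝕜} (ha : f.eval a = 0) :
    ∃ b, g.eval b = 0 ∧ ‖a - b‖ < δ * max ‖a‖ 1 := by
  have hg : g ≠ 0 := by rwa [← degree_ne_bot, hdeg, degree_ne_bot]
  have hn : f.natDegree ≠ 0 := fun h => hf <| by
    rw [eq_C_of_natDegree_eq_zero h] at ha ⊢
    simpa using ha
  have hnatDegree {p : 𝕜[X]} (hp : p ≠ 0) :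
      (p * C p.leadingCoeff⁻¹).natDegree = p.natDegree :=
    natDegree_mul_C (inv_ne_zero (leadingCoeff_ne_zero.2 hp))
  obtain ⟨b, hb, hab⟩ := exists_roots_norm_sub_lt_of_norm_coeff_sub_lt
    (f := f * C f.leadingCoeff⁻¹) (g := g * C g.leadingCoeff⁻¹) (a := a)
    (ε := δ ^ f.natDegree / (f.natDegree + 1)) (by positivity) (by simp [ha])
    (monic_mul_leadingCoeff_inv hf) (monic_mul_leadingCoeff_inv hg)
    (by rw [hnatDegree hf, hnatDegree hg, natDegree_eq_of_degree_eq hdeg])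
    (by simpa only [coeff_mul_C, ← div_eq_mul_inv] using hcoeff) (hsplit.mul (.C _))
  refine ⟨b, by simpa [hg] using hb, ?_⟩
  rwa [hnatDegree hf, mul_div_cancel₀ _ (by positivity), Real.pow_rpow_inv_natCast hδ.le hn] at hab

/-- `D`-stability, as in control theory: all roots of `p` lie in `D`. The zero polynomial is
`D`-stable only for `D = Set.univ`. -/
def IsStable (D : Set 𝕜) (p : 𝕜[X]) : Prop :=
  ∀ z, p.eval z = 0 → z ∈ D

section Limit

variable {ι : Type*} {l : Filter ι} {P : ι → 𝕜[X]} {p : 𝕜[X]}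

lemma eventually_norm_coeff_div_leadingCoeff_sub_lt (hp : p ≠ 0)
    (hcoeff : ∀ j, Tendsto (fun x => (P x).coeff j) l (𝓝 (p.coeff j)))
    (hdeg : ∀ᶠ x in l, (P x).degree = p.degree) {ε : ℝ} (hε : 0 < ε) :
    ∀ᶠ x in l, ∀ i,
      ‖(P x).coeff i / (P x).leadingCoeff - p.coeff i / p.leadingCoeff‖ < ε := by
  have hclose (i : ℕ) : ∀ᶠ x in l,
      ‖(P x).coeff i / (P x).coeff p.natDegree - p.coeff i / p.leadingCoeff‖ < ε := by
    simpa only [dist_eq_norm, Pi.div_apply, coeff_natDegree] using Metric.tendsto_nhds.1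
      ((hcoeff i).div (hcoeff p.natDegree) (leadingCoeff_ne_zero.2 hp)) ε hε
  filter_upwards [hdeg, (Set.finite_Iic p.natDegree).eventually_all.2 fun i _ => hclose i]
    with x hx hlow i
  have hnat : (P x).natDegree = p.natDegree := natDegree_eq_of_degree_eq hx
  rcases le_or_gt i p.natDegree with hi | hi
  · simpa only [leadingCoeff, hnat] using hlow i hi
  · simpa [coeff_eq_zero_of_natDegree_lt hi, coeff_eq_zero_of_natDegree_lt (hnat.trans_lt hi)]

lemma IsStable.eventually {D : Set 𝕜} (hstable : IsStable D p) (hD : IsOpen D) (hp : p ≠ 0)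
    (hsplit : p.Splits) (hcoeff : ∀ j, Tendsto (fun x => (P x).coeff j) l (𝓝 (p.coeff j)))
    (hdeg : ∀ᶠ x in l, (P x).degree = p.degree) :
    ∀ᶠ x in l, IsStable D (P x) := by
  have hfin : {b | p.eval b = 0}.Finite := finite_setOfPred_isRoot hp
  obtain ⟨δ, hδ, hmem⟩ := ((eventually_mem_nhdsWithin (a := (0 : ℝ)) (s := Set.Ioi 0)).and
    (hfin.eventually_all.2 fun b hb =>
      eventually_mem_of_norm_sub_lt_mul_max (hD.mem_nhds (hstable b hb)))).exists
  have hε : 0 < δ ^ p.natDegree / (p.natDegree + 1) := div_pos (pow_pos hδ _) (by positivity)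
  filter_upwards [hdeg, eventually_norm_coeff_div_leadingCoeff_sub_lt hp hcoeff hdeg hε]
    with x hx hclose a ha
  obtain ⟨b, hb, hab⟩ := exists_root_norm_sub_lt hδ (by rwa [← degree_ne_bot, hx, degree_ne_bot])
    hsplit hx.symm (fun i => by rw [norm_sub_rev, natDegree_eq_of_degree_eq hx]; exact hclose i) ha
  exact hmem b hb a hab

lemma eventually_exists_root_mem {U : Set 𝕜} {a : 𝕜} (ha : p.eval a = 0) (hU : U ∈ 𝓝 a)
    (hp : p ≠ 0) (hsplit : ∀ᶠ x in l, (P x).Splits)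
    (hcoeff : ∀ j, Tendsto (fun x => (P x).coeff j) l (𝓝 (p.coeff j)))
    (hdeg : ∀ᶠ x in l, (P x).degree = p.degree) :
    ∀ᶠ x in l, ∃ b ∈ U, (P x).eval b = 0 := by
  obtain ⟨r, hr, hball⟩ := Metric.mem_nhds_iff.1 hU
  have hδ : 0 < r / max ‖a‖ 1 := by positivity
  filter_upwards [hsplit, hdeg, eventually_norm_coeff_div_leadingCoeff_sub_lt hp hcoeff hdeg
    (ε := (r / max ‖a‖ 1) ^ p.natDegree / (p.natDegree + 1)) (by positivity)]
    with x hxsplit hx hclose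
  obtain ⟨b, hb, hab⟩ := exists_root_norm_sub_lt hδ hp hxsplit hx hclose ha
  rw [div_mul_cancel₀ _ (by positivity)] at hab
  exact ⟨b, hball (mem_ball_iff_norm'.2 hab), hb⟩

lemma eventually_isStable_iff [IsAlgClosed 𝕜] {D : Set 𝕜} (hD : IsOpen D)
    (hfrontier : ∀ z ∈ frontier D, p.eval z ≠ 0) (hp : p ≠ 0)
    (hcoeff : ∀ j, Tendsto (fun x => (P x).coeff j) l (𝓝 (p.coeff j)))
    (hdeg : ∀ᶠ x in l, (P x).degree = p.degree) :
    ∀ᶠ x in l, (IsStable D p ↔ IsStable D (P x)) := by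
  by_cases hstable : IsStable D p
  · filter_upwards [hstable.eventually hD hp (IsAlgClosed.splits p) hcoeff hdeg] with x hx
    exact iff_of_true hstable hx
  · obtain ⟨z, hz, hzD⟩ : ∃ z, p.eval z = 0 ∧ z ∉ D := by simpa [IsStable] using hstable
    have hzcl : z ∈ (closure D)ᶜ := fun hcl =>
      hfrontier z (hD.frontier_eq ▸ ⟨hcl, hzD⟩) hz
    filter_upwards [eventually_exists_root_mem hz
      (isClosed_closure.isOpen_compl.mem_nhds hzcl) hp
      (.of_forall fun x => IsAlgClosed.splits (P x)) hcoeff hdeg] with x ⟨b, hbD, hb⟩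
    exact iff_of_false hstable fun hx => hbD (subset_closure (hx b hb))

end Limit

theorem zero_exclusion_condition_general [IsAlgClosed 𝕜] {X : Type*} [TopologicalSpace X]
    {𝒬 : Set X} (hne : 𝒬.Nonempty) (hconn : IsPreconnected 𝒬) {D : Set 𝕜} (hD : IsOpen D)
    {P : X → 𝕜[X]} {n : ℕ} (hcoef : ∀ j, ContinuousOn (fun q => (P q).coeff j) 𝒬)
    (hdeg : ∀ q ∈ 𝒬, (P q).degree = n) :
    (∀ q ∈ 𝒬, IsStable D (P q)) ↔
      (∃ q ∈ 𝒬, IsStable D (P q)) ∧ ∀ q ∈ 𝒬, ∀ z ∈ frontier D, (P q).eval z ≠ 0 := by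
  constructor
  · intro hstable
    obtain ⟨q₀, hq₀⟩ := hne
    exact ⟨⟨q₀, hq₀, hstable q₀ hq₀⟩, fun q hq z hzfr hz =>
      hD.inter_frontier_eq.subset ⟨hstable q hq z hz, hzfr⟩⟩
  · rintro ⟨⟨q₀, hq₀, hstable⟩, hfrontier⟩ q hq
    have hlocal (x : X) (hx : x ∈ 𝒬) :
        ∀ᶠ y in 𝓝[𝒬] x, (IsStable D (P x) ↔ IsStable D (P y)) :=
      eventually_isStable_iff hD (hfrontier x hx) (by simp [← degree_ne_bot, hdeg x hx])
        (fun j => hcoef j x hx)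
        (eventually_nhdsWithin_of_forall fun y hy => (hdeg y hy).trans (hdeg x hx).symm)
    exact (hconn.induction₂ (fun x y => IsStable D (P x) ↔ IsStable D (P y)) hlocal
      (fun _ _ _ _ _ _ => Iff.trans) (fun _ _ _ _ => Iff.symm) hq₀ hq).1 hstable

end RootPerturbation

/-- **Zero Exclusion Condition.** For a polynomial family `P` with continuous
coefficients and invariant degree `n` on a nonempty connected set `𝒬`, and an open
region `D ⊆ ℂ`, all roots of `P q` lie in `D` for every `q ∈ 𝒬` if and only if this
holds for some `q ∈ 𝒬` and `P q` has no zero on the frontier of `D` for every `q ∈ 𝒬`. -/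
theorem zero_exclusion_condition (ℓ : ℕ) (𝒬 : Set (Fin ℓ → ℝ))
    (hne : 𝒬.Nonempty) (hconn : IsPreconnected 𝒬)
    (D : Set ℂ) (hD : IsOpen D)
    (P : (Fin ℓ → ℝ) → Polynomial ℂ) (n : ℕ)
    (hcoef : ∀ j : ℕ, ContinuousOn (fun q => (P q).coeff j) 𝒬)
    (hdeg : ∀ q ∈ 𝒬, (P q).degree = (n : WithBot ℕ)) :
    (∀ q ∈ 𝒬, ∀ z : ℂ, (P q).eval z = 0 → z ∈ D) ↔
      ((∃ q ∈ 𝒬, ∀ z : ℂ, (P q).eval z = 0 → z ∈ D) ∧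
        ∀ q ∈ 𝒬, ∀ z ∈ frontier D, (P q).eval z ≠ 0) :=
  zero_exclusion_condition_general hne hconn hD hcoef hdeg
end

section
/- (Invariance of the root count) Let 𝒬 ⊆ (Fin ℓ → ℝ) be connected, let D ⊆ ℂ be open, and let P : (Fin ℓ → ℝ) → Polynomial ℂ be a polynomial family with continuous coefficients and invariant degree n on 𝒬. Assume (P q).eval z ≠ 0 for every q ∈ 𝒬 and every z in the frontier of D. Then the number of roots of P q lying in D, counted with multiplicity (i.e., Multiset.countP (· ∈ D) applied to (P q).roots), is the same for all q ∈ 𝒬. -/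
open scoped Classical

/-!
Roots depend continuously on the coefficients as long as the degree does not drop: since
`‖P(s)‖ = ‖c‖ ∏ ‖s - a‖`, where `c` is the leading coefficient and `a` runs over the roots of `P`,
the root of `P` nearest to a root `s` of the limit tends to `s`. Dividing both polynomials by the
corresponding linear factors and inducting on the degree matches up all roots with multiplicity.
A root of the limit that is off the frontier of `D` lies in the interior of `D` or of its
complement, and the roots of `P` near it then lie on the same side. So the root count is locally
constant, hence constant on a preconnected set.
-/

open Filter Topology Polynomial

lemma eventually_mem_iff_of_notMem_frontier {X : Type*} [TopologicalSpace X] {S : Set X} {x : X}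
    (hx : x ∉ frontier S) : ∀ᶠ y in 𝓝 x, (y ∈ S ↔ x ∈ S) := by
  have hx' : x ∈ interior S ∪ interior Sᶜ := compl_frontier_eq_union_interior (s := S) ▸ hx
  rcases hx' with hin | hout
  · filter_upwards [mem_interior_iff_mem_nhds.mp hin] with y hy
    exact iff_of_true hy (interior_subset hin)
  · filter_upwards [mem_interior_iff_mem_nhds.mp hout] with y hy
    exact iff_of_false hy (interior_subset hout)

lemma splits_divByMonic_X_sub_C {R : Type*} [CommRing R] [IsDomain R] {p : R[X]} {a : R}
    (hp : p.Splits) (ha : p.IsRoot a) : (p /ₘ (X - C a)).Splits := by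
  rwa [← splits_X_sub_C_mul_iff, mul_divByMonic_eq_iff_isRoot.mpr ha]

lemma countP_roots_eq_countP_roots_divByMonic_add {R : Type*} [CommRing R] [IsDomain R]
    {p : R[X]} {a : R} (ha : a ∈ p.roots) (S : Set R) :
    p.roots.countP (· ∈ S) =
      (p /ₘ (X - C a)).roots.countP (· ∈ S) + if a ∈ S then 1 else 0 := by
  have hfactor : (X - C a) * (p /ₘ (X - C a)) = p :=
    mul_divByMonic_eq_iff_isRoot.mpr (isRoot_of_mem_roots ha)
  conv_lhs => rw [← hfactor, roots_mul (hfactor.symm ▸ ne_zero_of_mem_roots ha),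
    roots_X_sub_C, Multiset.singleton_add, Multiset.countP_cons]

lemma tendsto_eval_of_tendsto_coeff {ι R : Type*} [Semiring R] [TopologicalSpace R]
    [IsTopologicalSemiring R] {F : Filter ι} {P : ι → R[X]} {p : R[X]}
    (hdeg : ∀ᶠ q in F, (P q).natDegree = p.natDegree)
    (hcoeff : ∀ j, Tendsto (fun q => (P q).coeff j) F (𝓝 (p.coeff j))) (x : R) :
    Tendsto (fun q => (P q).eval x) F (𝓝 (p.eval x)) := by
  rw [eval_eq_sum_range]
  refine Tendsto.congr' ?_ (tendsto_finsetSum _ fun i _ => (hcoeff i).mul_const (x ^ i))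
  filter_upwards [hdeg] with q hq
  rw [eval_eq_sum_range, hq]

lemma tendsto_coeff_divByMonic_X_sub_C {ι R : Type*} [CommRing R] [TopologicalSpace R]
    [IsTopologicalSemiring R] {F : Filter ι} {P : ι → R[X]} {p : R[X]}
    (hdeg : ∀ᶠ q in F, (P q).natDegree = p.natDegree)
    (hcoeff : ∀ j, Tendsto (fun q => (P q).coeff j) F (𝓝 (p.coeff j)))
    {a : ι → R} {s : R} (ha : Tendsto a F (𝓝 s)) (j : ℕ) :
    Tendsto (fun q => (P q /ₘ (X - C (a q))).coeff j) F (𝓝 ((p /ₘ (X - C s)).coeff j)) := by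
  rw [coeff_divByMonic_X_sub_C]
  refine Tendsto.congr' ?_ (tendsto_finsetSum _ fun i _ => (ha.pow (i - (j + 1))).mul (hcoeff i))
  filter_upwards [hdeg] with q hq
  rw [coeff_divByMonic_X_sub_C, hq]

section NormedField

variable {ι K : Type*} [NormedField K] {F : Filter ι} {P : ι → K[X]} {p : K[X]}

lemma exists_mem_roots_norm_sub_pow_le (hp : p.Splits) (hdeg : p.natDegree ≠ 0) (x : K) :
    ∃ a ∈ p.roots, ‖p.leadingCoeff‖ * ‖x - a‖ ^ p.natDegree ≤ ‖p.eval x‖ := by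
  have hne : p.roots.toFinset.Nonempty := by
    simpa using hp.roots_ne_zero hdeg
  obtain ⟨a, ha, hmin⟩ := p.roots.toFinset.exists_min_image (fun b => ‖x - b‖) hne
  refine ⟨a, Multiset.mem_toFinset.mp ha, ?_⟩
  have hprod : ‖x - a‖ ^ p.natDegree ≤ (p.roots.map fun b => ‖x - b‖).prod := by
    rw [hp.natDegree_eq_card_roots, ← Multiset.prod_replicate, ← Multiset.map_const']
    exact Multiset.prod_map_le_prod_map₀ _ _ (fun _ _ => norm_nonneg _)
      fun b hb => hmin b (Multiset.mem_toFinset.mpr hb)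
  calc ‖p.leadingCoeff‖ * ‖x - a‖ ^ p.natDegree
      ≤ ‖p.leadingCoeff‖ * (p.roots.map fun b => ‖x - b‖).prod := by gcongr
    _ = ‖p.eval x‖ := by
      rw [hp.eval_eq_prod_roots, norm_mul, ← normHom_apply (p.roots.map _).prod,
        map_multiset_prod, Multiset.map_map]
      rfl

lemma exists_tendsto_root (hdeg : ∀ᶠ q in F, (P q).natDegree = p.natDegree)
    (hsplits : ∀ᶠ q in F, (P q).Splits)
    (hcoeff : ∀ j, Tendsto (fun q => (P q).coeff j) F (𝓝 (p.coeff j)))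
    {s : K} (hs : s ∈ p.roots) :
    ∃ a : ι → K, (∀ᶠ q in F, a q ∈ (P q).roots) ∧ Tendsto a F (𝓝 s) := by
  have hp : p ≠ 0 := ne_zero_of_mem_roots hs
  have hn : p.natDegree ≠ 0 :=
    ((Multiset.card_pos_iff_exists_mem.mpr ⟨s, hs⟩).trans_le p.card_roots').ne'
  choose! a ha hle using fun q (h : (P q).Splits ∧ (P q).natDegree ≠ 0) =>
    exists_mem_roots_norm_sub_pow_le h.1 h.2 s
  have hev : ∀ᶠ q in F, (P q).Splits ∧ (P q).natDegree = p.natDegree := hsplits.and hdeg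
  refine ⟨a, hev.mono fun q hq => ha q ⟨hq.1, hq.2 ▸ hn⟩, ?_⟩
  have hbound : Tendsto (fun q => ‖(P q).eval s‖ / ‖(P q).coeff p.natDegree‖) F (𝓝 0) := by
    have hlim := (tendsto_eval_of_tendsto_coeff hdeg hcoeff s).norm.div
      (hcoeff p.natDegree).norm (norm_ne_zero_iff.mpr (leadingCoeff_ne_zero.mpr hp))
    rwa [(isRoot_of_mem_roots hs).eq_zero, norm_zero, zero_div] at hlim
  have hpow : Tendsto (fun q => ‖s - a q‖ ^ p.natDegree) F (𝓝 0) := by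
    refine squeeze_zero' (.of_forall fun _ => by positivity) ?_ hbound
    filter_upwards [hev, (hcoeff p.natDegree).eventually_ne (leadingCoeff_ne_zero.mpr hp)]
      with q ⟨hq, hqn⟩ hlead
    rw [le_div_iff₀' (norm_pos_iff.mpr hlead)]
    simpa only [leadingCoeff, hqn] using hle q ⟨hq, hqn ▸ hn⟩
  have hnorm : Tendsto (fun q => ‖s - a q‖) F (𝓝 0) := by
    have hroot := hpow.rpow_const (p := (p.natDegree : ℝ)⁻¹) (.inr (by positivity))
    simpa only [Real.pow_rpow_inv_natCast (norm_nonneg _) hn,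
      Real.zero_rpow (inv_ne_zero (Nat.cast_ne_zero.mpr hn))] using hroot
  exact tendsto_iff_norm_sub_tendsto_zero.mpr (by simpa only [norm_sub_rev s] using hnorm)

theorem eventually_countP_roots_eq (hdeg : ∀ᶠ q in F, (P q).natDegree = p.natDegree)
    (hsplits : ∀ᶠ q in F, (P q).Splits) (hp : p.Splits)
    (hcoeff : ∀ j, Tendsto (fun q => (P q).coeff j) F (𝓝 (p.coeff j)))
    {S : Set K} (hS : ∀ z ∈ frontier S, ¬ p.IsRoot z) :
    ∀ᶠ q in F, (P q).roots.countP (· ∈ S) = p.roots.countP (· ∈ S) := by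
  induction hn : p.natDegree generalizing P p with
  | zero =>
    filter_upwards [hdeg] with q hq
    rw [eq_C_of_natDegree_eq_zero hn, eq_C_of_natDegree_eq_zero (hq.trans hn), roots_C, roots_C]
  | succ n ih =>
    obtain ⟨s, hs⟩ := Multiset.exists_mem_of_ne_zero (hp.roots_ne_zero (by lia))
    obtain ⟨a, ha, has⟩ := exists_tendsto_root hdeg hsplits hcoeff hs
    have hsroot : p.IsRoot s := isRoot_of_mem_roots hs
    have hdvd : p /ₘ (X - C s) ∣ p :=
      Dvd.intro_left _ (mul_divByMonic_eq_iff_isRoot.mpr hsroot)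
    have hquot : ∀ᶠ q in F, (P q /ₘ (X - C (a q))).roots.countP (· ∈ S) =
        (p /ₘ (X - C s)).roots.countP (· ∈ S) := by
      refine ih ?_ ?_ (splits_divByMonic_X_sub_C hp hsroot)
        (tendsto_coeff_divByMonic_X_sub_C hdeg hcoeff has)
        (fun z hz hroot => hS z hz (hroot.dvd hdvd)) ?_
      · filter_upwards [hdeg] with q hq
        simp only [natDegree_divByMonic _ (monic_X_sub_C _), natDegree_X_sub_C, hq]
      · filter_upwards [hsplits, ha] with q hq haq using
          splits_divByMonic_X_sub_C hq (isRoot_of_mem_roots haq)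
      · simp only [natDegree_divByMonic _ (monic_X_sub_C _), natDegree_X_sub_C, hn,
          Nat.add_sub_cancel]
    have hsame_side : ∀ᶠ q in F, (a q ∈ S ↔ s ∈ S) :=
      has.eventually <| eventually_mem_iff_of_notMem_frontier fun hfr =>
        hS s hfr hsroot
    filter_upwards [ha, hquot, hsame_side] with q haq hq hside
    simp only [countP_roots_eq_countP_roots_divByMonic_add haq,
      countP_roots_eq_countP_roots_divByMonic_add hs, hq, hside]

theorem root_count_invariant_general {X : Type*} [TopologicalSpace X] {𝒬 : Set X}
    (hconn : IsPreconnected 𝒬) {D : Set K} {P : X → K[X]} {n : ℕ}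
    (hsplits : ∀ q ∈ 𝒬, (P q).Splits)
    (hcoef : ∀ j, ContinuousOn (fun q => (P q).coeff j) 𝒬)
    (hdeg : ∀ q ∈ 𝒬, (P q).degree = n)
    (hfr : ∀ q ∈ 𝒬, ∀ z ∈ frontier D, (P q).eval z ≠ 0) :
    ∀ q ∈ 𝒬, ∀ q' ∈ 𝒬, (P q).roots.countP (· ∈ D) = (P q').roots.countP (· ∈ D) := by
  have hlocal : ContinuousOn (fun q => (P q).roots.countP (· ∈ D)) 𝒬 := fun q hq =>
    tendsto_nhds_of_eventually_eq <| eventually_countP_roots_eq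
      (eventually_nhdsWithin_of_forall fun q' hq' =>
        natDegree_eq_natDegree ((hdeg q' hq').trans (hdeg q hq).symm))
      (eventually_nhdsWithin_of_forall hsplits) (hsplits q hq) (fun j => hcoef j q hq) (hfr q hq)
  exact fun q hq q' hq' => hconn.constant hlocal hq hq'

end NormedField

/-- **Invariance of the root count.** For a polynomial family `P` with continuous
coefficients and invariant degree `n` on a connected set `𝒬`, if `P q` never vanishes
on the frontier of the open set `D` for `q ∈ 𝒬`, then the number of roots of `P q`
in `D`, counted with multiplicity, is the same for all `q ∈ 𝒬`. -/
theorem root_count_invariant (ℓ : ℕ) (𝒬 : Set (Fin ℓ → ℝ))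
    (hconn : IsPreconnected 𝒬)
    (D : Set ℂ) (hD : IsOpen D)
    (P : (Fin ℓ → ℝ) → Polynomial ℂ) (n : ℕ)
    (hcoef : ∀ j : ℕ, ContinuousOn (fun q => (P q).coeff j) 𝒬)
    (hdeg : ∀ q ∈ 𝒬, (P q).degree = (n : WithBot ℕ))
    (hfr : ∀ q ∈ 𝒬, ∀ z ∈ frontier D, (P q).eval z ≠ 0) :
    ∀ q ∈ 𝒬, ∀ q' ∈ 𝒬,
      Multiset.countP (· ∈ D) (P q).roots = Multiset.countP (· ∈ D) (P q').roots := by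
  exact root_count_invariant_general hconn (fun q _ => IsAlgClosed.splits (P q)) hcoef hdeg hfr
end

section
/- (Validity of upper bounds found on subdomains) Let f : (Fin ℓ → ℝ) → ℂ, let 𝒬 ⊆ (Fin ℓ → ℝ) be convex, and let q⁰ ∈ Q ⊆ 𝒬. If k ≥ 0 satisfies 0 ∈ f '' (k-inflation of Q about q⁰), then 0 ∈ f '' (κ-inflation of 𝒬 about q⁰) for every κ ≥ k. -/
open AffineMap Set

section Homothety

variable {𝕜 E : Type*} [AddCommGroup E] {x : E} {s : Set E}

theorem coe_homothety_eq_add_smul_sub [CommRing 𝕜] [Module 𝕜 E] (x : E) (r : 𝕜) :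
    ⇑(homothety x r) = fun y => x + r • (y - x) := by
  simp only [coe_homothety, vsub_eq_sub, vadd_eq_add, add_comm]

theorem homothety_image_subset_of_starConvex [CommRing 𝕜] [PartialOrder 𝕜] [AddRightMono 𝕜]
    [Module 𝕜 E] {t : 𝕜} (hs : StarConvex 𝕜 x s) (ht₀ : 0 ≤ t) (ht₁ : t ≤ 1) :
    homothety x t '' s ⊆ s := by
  rintro _ ⟨y, hy, rfl⟩
  rw [coe_homothety_eq_add_smul_sub]
  exact hs.add_smul_sub_mem hy ht₀ ht₁

variable [Field 𝕜] [LinearOrder 𝕜] [IsStrictOrderedRing 𝕜] [Module 𝕜 E]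

theorem homothety_image_subset_homothety_image_of_starConvex {a b : 𝕜}
    (hs : StarConvex 𝕜 x s) (ha : 0 ≤ a) (hab : a ≤ b) :
    homothety x a '' s ⊆ homothety x b '' s := by
  -- For `b = 0` the junk value `a / 0 = 0` does no harm, since then `a = 0` as well.
  have hfactor : b * (a / b) = a :=
    mul_div_cancel_of_imp' fun hb => le_antisymm (hab.trans_eq hb) ha
  calc
    homothety x a '' s = homothety x b '' (homothety x (a / b) '' s) := by
      rw [← image_comp, ← coe_comp, ← homothety_mul, hfactor]
    _ ⊆ homothety x b '' s := image_mono <|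
      homothety_image_subset_of_starConvex hs (div_nonneg ha (ha.trans hab))
        (div_le_one_of_le₀ hab (ha.trans hab))

theorem subdomain_upper_bound_valid_general {α : Type*} (f : E → α) {z : α} {𝒬 Q : Set E} {q₀ : E}
    (h𝒬 : StarConvex 𝕜 q₀ 𝒬) (hQ𝒬 : Q ⊆ 𝒬) {k κ : 𝕜} (hk : 0 ≤ k) (hκ : k ≤ κ)
    (h : z ∈ f '' ((fun q => q₀ + k • (q - q₀)) '' Q)) :
    z ∈ f '' ((fun q => q₀ + κ • (q - q₀)) '' 𝒬) := by
  rw [← coe_homothety_eq_add_smul_sub] at h ⊢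
  have hinflation : homothety q₀ k '' Q ⊆ homothety q₀ κ '' 𝒬 :=
    (image_mono hQ𝒬).trans (homothety_image_subset_homothety_image_of_starConvex h𝒬 hk hκ)
  exact image_mono hinflation h

end Homothety

/-- **Validity of upper bounds found on subdomains.** A zero of the value set found on a
subdomain `Q ⊆ 𝒬` at inflation `k` witnesses that the value set of the whole convex
domain `𝒬` contains zero at every inflation `κ ≥ k`. -/
theorem subdomain_upper_bound_valid (ℓ : ℕ) (f : (Fin ℓ → ℝ) → ℂ)
    (𝒬 Q : Set (Fin ℓ → ℝ)) (h𝒬 : Convex ℝ 𝒬) (hQ𝒬 : Q ⊆ 𝒬)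
    (q₀ : Fin ℓ → ℝ) (hq₀ : q₀ ∈ Q) (k : ℝ) (hk : 0 ≤ k)
    (h : (0 : ℂ) ∈ f '' ((fun q => q₀ + k • (q - q₀)) '' Q)) :
    ∀ κ : ℝ, k ≤ κ → (0 : ℂ) ∈ f '' ((fun q => q₀ + κ • (q - q₀)) '' 𝒬) := by
  intro κ hκ
  exact subdomain_upper_bound_valid_general f (h𝒬.starConvex (hQ𝒬 hq₀)) hQ𝒬 hk hκ h
end

section
/- (Attainment of the convex-hull lower bound) Let f : (Fin ℓ → ℝ) → ℂ be continuous, let Q ⊆ (Fin ℓ → ℝ) be compact, and let q⁰ : Fin ℓ → ℝ. If the set S := {κ : ℝ | 0 ≤ κ ∧ 0 ∈ convexHull ℝ (f '' (κ-inflation of Q about q⁰))} is nonempty, then its infimum is attained: sInf S ∈ S. -/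
/-!
By Carathéodory's theorem, a point `y` lies in the convex hull of a set of values in a
`d`-dimensional space iff it is a convex combination of at most `d + 1` of these values. The weights
and base points of such combinations range over compact sets, and projecting a closed relation along
a compact set gives a closed set, so the inflations whose hull contains `y` form a closed set of
parameters.
-/

open Set

section Caratheodory

variable {𝕜 F : Type*} [Field 𝕜] [LinearOrder 𝕜] [IsStrictOrderedRing 𝕜]
  [AddCommGroup F] [Module 𝕜 F] [FiniteDimensional 𝕜 F]

theorem mem_convexHull_iff_exists_le_finrank_succ {s : Set F} {y : F} :
    y ∈ convexHull 𝕜 s ↔ ∃ n ≤ Module.finrank 𝕜 F + 1, ∃ w ∈ stdSimplex 𝕜 (Fin n),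
      ∃ z : Fin n → F, (∀ i, z i ∈ s) ∧ ∑ i, w i • z i = y := by
  constructor
  · intro hy
    obtain ⟨ι, _, z, w, hz, hindep, hw_pos, hw_sum, rfl⟩ := eq_pos_convex_span_of_mem_convexHull hy
    have hcard : Fintype.card ι ≤ Module.finrank 𝕜 F + 1 :=
      hindep.card_le_finrank_succ.trans (Nat.succ_le_succ (Submodule.finrank_le _))
    let e : Fin (Fintype.card ι) ≃ ι := (Fintype.equivFin ι).symm
    have hw : w ∘ e ∈ stdSimplex 𝕜 (Fin (Fintype.card ι)) :=
      ⟨fun i => (hw_pos (e i)).le, (e.sum_comp w).trans hw_sum⟩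
    exact ⟨Fintype.card ι, hcard, w ∘ e, hw, z ∘ e, fun i => hz (mem_range_self (e i)),
      e.sum_comp fun j => w j • z j⟩
  · rintro ⟨n, -, w, hw, z, hz, rfl⟩
    exact mem_convexHull_of_exists_fintype w z hw.1 hw.2 hz rfl

theorem mem_convexHull_image_iff_exists_le_finrank_succ {E : Type*} {g : E → F} {Q : Set E}
    {y : F} :
    y ∈ convexHull 𝕜 (g '' Q) ↔ ∃ n ≤ Module.finrank 𝕜 F + 1, ∃ w ∈ stdSimplex 𝕜 (Fin n),
      ∃ q : Fin n → E, (∀ i, q i ∈ Q) ∧ ∑ i, w i • g (q i) = y := by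
  rw [mem_convexHull_iff_exists_le_finrank_succ]
  refine exists_congr fun n => and_congr_right fun _ => exists_congr fun w =>
    and_congr_right fun _ => ⟨?_, ?_⟩
  · rintro ⟨z, hz, hsum⟩
    choose q hqQ hqz using hz
    exact ⟨q, hqQ, by simpa only [hqz] using hsum⟩
  · rintro ⟨q, hqQ, hsum⟩
    exact ⟨g ∘ q, fun i => mem_image_of_mem g (hqQ i), hsum⟩

end Caratheodory

section Closedness

variable {X E F : Type*} [TopologicalSpace X] [TopologicalSpace E]
  [AddCommGroup F] [Module ℝ F] [TopologicalSpace F] [T1Space F]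
  [ContinuousAdd F] [ContinuousSMul ℝ F] {g : X → E → F} {Q : Set E}

theorem isClosed_setOf_exists_sum_smul_eq (hg : Continuous (Function.uncurry g))
    (hQ : IsCompact Q) (ι : Type*) [Fintype ι] (y : F) :
    IsClosed {x | ∃ w ∈ stdSimplex ℝ ι, ∃ q : ι → E,
      (∀ i, q i ∈ Q) ∧ ∑ i, w i • g x (q i) = y} := by
  let R : SetRel X ((ι → ℝ) × (ι → E)) := {a | ∑ i, a.2.1 i • g a.1 (a.2.2 i) = y}
  have hR : IsClosed R := by
    have hcont : Continuous fun a : X × (ι → ℝ) × (ι → E) =>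
        ∑ i, a.2.1 i • g a.1 (a.2.2 i) := by
      fun_prop
    exact isClosed_singleton.preimage hcont
  have hK : IsCompact (stdSimplex ℝ ι ×ˢ univ.pi fun _ : ι => Q) :=
    (isCompact_stdSimplex ℝ ι).prod (isCompact_univ_pi fun _ => hQ)
  convert hR.relPreimage_of_isCompact hK using 1
  ext x
  simp [R, and_assoc]

theorem isClosed_setOf_mem_convexHull_image [FiniteDimensional ℝ F]
    (hg : Continuous (Function.uncurry g)) (hQ : IsCompact Q) (y : F) :
    IsClosed {x | y ∈ convexHull ℝ (g x '' Q)} := by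
  have hunion : {x | y ∈ convexHull ℝ (g x '' Q)} =
      ⋃ n ∈ Iic (Module.finrank ℝ F + 1), {x | ∃ w ∈ stdSimplex ℝ (Fin n),
        ∃ q : Fin n → E, (∀ i, q i ∈ Q) ∧ ∑ i, w i • g x (q i) = y} := by
    ext x
    simp only [mem_convexHull_image_iff_exists_le_finrank_succ, mem_ofPred_eq, mem_iUnion,
      mem_Iic, exists_prop]
  rw [hunion]
  exact (finite_Iic _).isClosed_biUnion fun n _ => isClosed_setOf_exists_sum_smul_eq hg hQ (Fin n) y

end Closedness

theorem convexHull_lower_bound_attained_general {E F : Type*}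
    [AddCommGroup E] [Module ℝ E] [TopologicalSpace E] [IsTopologicalAddGroup E]
    [ContinuousSMul ℝ E] [AddCommGroup F] [Module ℝ F] [TopologicalSpace F] [T1Space F]
    [ContinuousAdd F] [ContinuousSMul ℝ F] [FiniteDimensional ℝ F]
    {f : E → F} (hf : Continuous f) {Q : Set E} (hQ : IsCompact Q) (q₀ : E) (y : F)
    (hS : {κ : ℝ | 0 ≤ κ ∧
      y ∈ convexHull ℝ (f '' ((fun q => q₀ + κ • (q - q₀)) '' Q))}.Nonempty) :
    sInf {κ : ℝ | 0 ≤ κ ∧ y ∈ convexHull ℝ (f '' ((fun q => q₀ + κ • (q - q₀)) '' Q))} ∈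
      {κ : ℝ | 0 ≤ κ ∧ y ∈ convexHull ℝ (f '' ((fun q => q₀ + κ • (q - q₀)) '' Q))} := by
  have hcont : Continuous (Function.uncurry fun (κ : ℝ) q => f (q₀ + κ • (q - q₀))) :=
    hf.comp (f := fun p : ℝ × E => q₀ + p.1 • (p.2 - q₀)) (by fun_prop)
  have hclosed : IsClosed {κ : ℝ |
      y ∈ convexHull ℝ (f '' ((fun q => q₀ + κ • (q - q₀)) '' Q))} := by
    simpa only [image_image] using isClosed_setOf_mem_convexHull_image hcont hQ y
  exact (isClosed_Ici.inter hclosed).csInf_mem hS ⟨0, fun _ hκ => hκ.1⟩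

/-- **Attainment of the convex-hull lower bound.** For `f` continuous and `Q` compact,
the set of nonnegative inflations `κ` at which the convex hull of the value set of the
`κ`-inflated `Q` contains the origin attains its infimum (when nonempty). -/
theorem convexHull_lower_bound_attained (ℓ : ℕ) (f : (Fin ℓ → ℝ) → ℂ)
    (hf : Continuous f) (Q : Set (Fin ℓ → ℝ)) (hQ : IsCompact Q)
    (q₀ : Fin ℓ → ℝ)
    (hS : {κ : ℝ | 0 ≤ κ ∧
      (0 : ℂ) ∈ convexHull ℝ (f '' ((fun q => q₀ + κ • (q - q₀)) '' Q))}.Nonempty) :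
    sInf {κ : ℝ | 0 ≤ κ ∧
        (0 : ℂ) ∈ convexHull ℝ (f '' ((fun q => q₀ + κ • (q - q₀)) '' Q))} ∈
      {κ : ℝ | 0 ≤ κ ∧
        (0 : ℂ) ∈ convexHull ℝ (f '' ((fun q => q₀ + κ • (q - q₀)) '' Q))} :=
  convexHull_lower_bound_attained_general hf hQ q₀ 0 hS
end
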